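/- arXiv:1801.06110 — 2 statements merged into one kernel-verified Lean document; each statement's English description precedes it below -/
import Mathlib

section
/- Let ρ be the Dickman–de Bruijn function and for an integer d ≥ 2 let u(d) be the unique positive real with ρ(u(d)) = 1/d. For every D ≥ 2 and every ε > 0 there exist a constant C > 0 and p₀ such that for every prime p ≥ p₀ and every divisor d of p−1 with 2 ≤ d ≤ D, the least d-th power non-residue satisfies 𝐠_p(d) ≤ C·p^(1/(4·u(d)) + ε). -/
/-!
Suppose that every integer up to `y = p ^ (1 / (4 * u d) + ε)` is a `d`-th power residue modulo `p`.
Then so is every `y`-smooth integer. Choose `v` slightly below `u d` and a small `δ > 0` such that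
`X = p ^ (1 / 4 + δ) ≤ y ^ v`. The proportion of `y`-smooth integers up to `X` is asymptotically at
least `ρ v`, which is larger than `ρ (u d) = 1 / d`. On the other hand, by Burgess's theorem all sums
of nontrivial characters of order dividing `d` over the integers up to `X` are `o(X)`, so that the
`d`-th power residues up to `X` have proportion `1 / d + o(1)`. This is a contradiction for large
`p`; see `least_le`. Two ingredients carry the argument.

Burgess's theorem (`burgess`). The sum of `χ n` is averaged over shifts `n ↦ n + a * b`, and Hölder's
inequality (`holder_fiber`) separates the number of coincidences `n / a = n' / a'` (`card_quad`) from
the moments `∑ x, ‖∑ b, χ (x + b)‖ ^ (2 * r)` (`moment`). The moments are controlled by Weil's bound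
for complete sums of `χ (f x)`. Only polynomials `f` with a simple zero are needed, and for these the
bound follows from Stepanov's method (`stepanov`): an auxiliary polynomial vanishing to high order at
all solutions of `f x ^ ((p - 1) / d) = a` bounds their number by `p / d + O(√p)`. This one-sided
estimate for every `a` suffices because the numbers of solutions add up to nearly `p` (`weil_zero`).

The density of smooth numbers (`smoothDensity_all`). By Buchstab's identity (`buchstab`), the densities
at `u` and `v < u` differ by a sum of densities over the primes in `(x ^ (1 / u), x ^ (1 / v)]`,
weighted by `1 / q`. Mertens' first theorem (`mertens_first`) evaluates this weight as
`(u - v) / v` up to second order in `u - v` (`sum_recip_primes`). This is Euler's method for the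
differential-delay equation of `ρ`, with an error quadratic in the step size
(`smoothDensity_step`), and refining the steps gives the limit. That `ρ` is nonnegative, and hence
decreasing, comes out of the same induction.
-/

/-- The least positive integer whose residue class mod `p` is not a `d`-th power
residue, i.e. is not of the form `x ^ d` for a unit `x` of `ZMod p`. -/
noncomputable def leastDPowNonRes (p d : ℕ) : ℕ :=
  sInf {n : ℕ | 0 < n ∧ ¬ ∃ x : (ZMod p)ˣ, ((x : ZMod p)) ^ d = (n : ZMod p)}

/-! ### Stepanov's method -/

open Polynomial in
/-- Coefficient polynomials of the iterated derivatives of `f ^ N * u`: for `ℓ ≤ N`,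
`derivative^[ℓ] (f ^ N * u) = f ^ (N - ℓ) * stepW f N ℓ u`. -/
noncomputable def stepW {F : Type*} [Field F] (f : F[X]) (N : ℕ) : ℕ → F[X] →ₗ[F] F[X]
  | 0 => LinearMap.id
  | ℓ + 1 =>
    (LinearMap.mulLeft F (C ((N - ℓ : ℕ) : F) * derivative f)).comp (stepW f N ℓ)
      + (LinearMap.mulLeft F f).comp (derivative.comp (stepW f N ℓ))

open Polynomial in
lemma stepW_succ {F : Type*} [Field F] (f : F[X]) (N ℓ : ℕ) (u : F[X]) :
    stepW f N (ℓ + 1) u = C ((N - ℓ : ℕ) : F) * derivative f * stepW f N ℓ u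
      + f * derivative (stepW f N ℓ u) := by
  simp [stepW, mul_assoc]

open Polynomial in
/-- Leibniz formula for the derivatives of `f ^ N * u * g` when `g` is a constant for the
derivation; below `g` is a power of `X ^ p`. -/
lemma stepW_iterate {F : Type*} [Field F] (f : F[X]) (N ℓ : ℕ) (hℓ : ℓ ≤ N) (u g : F[X])
    (hg : derivative g = 0) :
    derivative^[ℓ] (f ^ N * u * g) = f ^ (N - ℓ) * stepW f N ℓ u * g := by
  induction ℓ with
  | zero => simp [stepW]
  | succ ℓ ih =>
    rw [Function.iterate_succ_apply', ih (by omega), stepW_succ]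
    obtain ⟨k, hk⟩ : ∃ k, N - ℓ = k + 1 := ⟨N - ℓ - 1, by omega⟩
    have hk' : N - (ℓ + 1) = k := by omega
    rw [derivative_mul, derivative_mul, derivative_pow, hg, hk, hk']
    simp only [Nat.add_sub_cancel]
    ring

open Polynomial in
lemma stepW_natDegree {F : Type*} [Field F] (f : F[X]) (N ℓ m : ℕ) (hm : f.natDegree ≤ m)
    (u : F[X]) (c : ℕ) (hu : u.natDegree ≤ c) :
    (stepW f N ℓ u).natDegree ≤ c + ℓ * m := by
  induction ℓ with
  | zero => simpa [stepW] using hu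
  | succ ℓ ih =>
    rw [stepW_succ]
    have h1 : (derivative f).natDegree ≤ m := (natDegree_derivative_le f).trans (by omega)
    have h2 : (derivative (stepW f N ℓ u)).natDegree ≤ c + ℓ * m :=
      (natDegree_derivative_le _).trans (by omega)
    refine natDegree_add_le_of_degree_le ?_ ?_
    · refine natDegree_mul_le.trans ?_
      have := natDegree_C_mul_le ((N - ℓ : ℕ) : F) (derivative f)
      rw [add_one_mul]; omega
    · refine natDegree_mul_le.trans ?_
      rw [add_one_mul]; omega

open Polynomial in
/-- Nonzero polynomials with pairwise distinct orders of vanishing at `0` have nonzero sum. -/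
lemma sum_ne_zero_of_natTrailingDegree {F : Type*} [Field F] {ι : Type*} (s : Finset ι)
    (h : ι → F[X]) (hinj : ∀ i ∈ s, ∀ j ∈ s, h i ≠ 0 → h j ≠ 0 →
      (h i).natTrailingDegree = (h j).natTrailingDegree → i = j)
    (hne : ∃ i ∈ s, h i ≠ 0) : ∑ i ∈ s, h i ≠ 0 := by
  classical
  obtain ⟨i, hi, hmin⟩ := Finset.exists_min_image (s.filter (fun i => h i ≠ 0))
    (fun i => (h i).natTrailingDegree) (by
      obtain ⟨i, hi, h0⟩ := hne
      exact ⟨i, by simp [hi, h0]⟩)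
  simp only [Finset.mem_filter] at hi hmin
  intro h0
  have := congrArg (fun q => coeff q (h i).natTrailingDegree) h0
  simp only [finsetSum_coeff, coeff_zero] at this
  rw [Finset.sum_eq_single i] at this
  · exact hi.2 (trailingCoeff_eq_zero.1 this)
  · intro j hj hji
    by_cases hj0 : h j = 0
    · simp [hj0]
    · apply coeff_eq_zero_of_lt_natTrailingDegree
      exact lt_of_le_of_ne (hmin j ⟨hj, hj0⟩)
        (fun e => hji (hinj i hi.1 j hj hi.2 hj0 e).symm)
  · intro h; exact absurd hi.1 h

open Polynomial in
/-- The auxiliary polynomials of Stepanov's method do not vanish: since `f` has a simple zero at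
`0`, the summands have distinct orders of vanishing there. -/
lemma stepanov_ne_zero {F : Type*} [Field F] {p d c K : ℕ} (hdc : d * c < p)
    (g : F[X]) (hg : g.eval 0 ≠ 0)
    (u : Fin d × Fin K → F[X]) (hu : ∀ i, u i ∈ degreeLT F c) (hne : ∃ i, u i ≠ 0) :
    ∑ i : Fin d × Fin K, u i * (X * g) ^ ((i.1 : ℕ) * c) * X ^ ((i.2 : ℕ) * p) ≠ 0 := by
  have hg0 : g ≠ 0 := by rintro rfl; simp at hg
  have hgt : g.natTrailingDegree = 0 := by
    rw [natTrailingDegree_eq_zero]; right; rwa [coeff_zero_eq_eval_zero]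
  have key : ∀ i, u i ≠ 0 →
      (u i * (X * g) ^ ((i.1 : ℕ) * c) * X ^ ((i.2 : ℕ) * p)).natTrailingDegree
        = (u i).natTrailingDegree + i.1 * c + i.2 * p := by
    intro i hi
    have h1 : X * g ≠ 0 := mul_ne_zero X_ne_zero hg0
    have h2 : (X * g) ^ ((i.1 : ℕ) * c) ≠ 0 := pow_ne_zero _ h1
    rw [natTrailingDegree_mul (mul_ne_zero hi h2) (pow_ne_zero _ X_ne_zero),
      natTrailingDegree_mul hi h2, natTrailingDegree_X_pow]
    congr 2
    have : ∀ n, ((X * g) ^ n).natTrailingDegree = n := by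
      intro n
      induction n with
      | zero => simp
      | succ n ih =>
        rw [pow_succ, natTrailingDegree_mul (pow_ne_zero _ h1) h1, ih,
          natTrailingDegree_mul X_ne_zero hg0, hgt]
        simp
    exact this _
  have small : ∀ i, u i ≠ 0 → (u i).natTrailingDegree < c := by
    intro i hi
    refine (natTrailingDegree_le_natDegree _).trans_lt ?_
    have := mem_degreeLT.1 (hu i)
    exact (natDegree_lt_iff_degree_lt hi).2 this
  apply sum_ne_zero_of_natTrailingDegree
  · intro i _ j _ hi hj hij
    have hi' : u i ≠ 0 := fun h => hi (by simp [h])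
    have hj' : u j ≠ 0 := fun h => hj (by simp [h])
    rw [key i hi', key j hj'] at hij
    have si := small i hi'
    have sj := small j hj'
    set v := (u i).natTrailingDegree
    set w := (u j).natTrailingDegree
    have bi : v + i.1 * c < p := by
      have : (i.1 + 1 : ℕ) * c ≤ d * c := Nat.mul_le_mul_right _ i.1.2
      rw [add_one_mul] at this; omega
    have bj : w + j.1 * c < p := by
      have : (j.1 + 1 : ℕ) * c ≤ d * c := Nat.mul_le_mul_right _ j.1.2
      rw [add_one_mul] at this; omega
    have h2 : (i.2 : ℕ) = j.2 := by
      have := congrArg (· / p) hij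
      simpa [Nat.add_mul_div_right _ _ (by omega : 0 < p), Nat.div_eq_of_lt bi,
        Nat.div_eq_of_lt bj] using this
    rw [h2] at hij
    have h3 : v + i.1 * c = w + j.1 * c := by omega
    have h1 : (i.1 : ℕ) = j.1 := by
      have := congrArg (· / c) h3
      simpa [Nat.add_mul_div_right _ _ (by omega : 0 < c), Nat.div_eq_of_lt si,
        Nat.div_eq_of_lt sj] using this
    exact Prod.ext (Fin.ext h1) (Fin.ext h2)
  · obtain ⟨i, hi⟩ := hne
    refine ⟨i, Finset.mem_univ _, ?_⟩
    have h1 : X * g ≠ 0 := mul_ne_zero X_ne_zero hg0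
    exact mul_ne_zero (mul_ne_zero hi (pow_ne_zero _ h1)) (pow_ne_zero _ X_ne_zero)

open Polynomial in
lemma card_mul_le_natDegree {F : Type*} [Field F] (R : F[X]) (hR : R ≠ 0) (S : Finset F) (M : ℕ)
    (h : ∀ x ∈ S, M ≤ R.rootMultiplicity x) : M * S.card ≤ R.natDegree := by
  classical
  have h1 : ∏ x ∈ S, (X - C x) ^ M ∣ R := by
    apply Finset.prod_dvd_of_coprime
    · intro x _ y _ hxy
      exact (pairwise_coprime_X_sub_C Function.injective_id hxy).pow
    · intro x hx
      exact (le_rootMultiplicity_iff hR).1 (h x hx)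
  have h2 := natDegree_le_of_dvd h1 hR
  rw [natDegree_prod _ _ (fun x _ => pow_ne_zero _ (X_sub_C_ne_zero x))] at h2
  simpa [mul_comm] using h2

open Polynomial in
/-- The core of Stepanov's method, with `f = X * g`: the polynomial
`f ^ M * ∑ i, u i * f ^ (i.1 * c) * X ^ (i.2 * p)`, with `(i.1, i.2)` ranging over
`Fin d × Fin K` and `deg (u i) < c`, can be chosen nonzero and vanishing to order `M` at every
point of `S`; comparing with its degree bounds `S.card`. -/
lemma stepanov_raw {p : ℕ} [Fact p.Prime] {d c K M m : ℕ} (hc : 1 ≤ c)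
    (hdc : d * c = p - 1) (g : (ZMod p)[X]) (hg : g.eval 0 ≠ 0)
    (hm : (X * g).natDegree ≤ m) (hM1 : 1 ≤ M) (hMp : M < p)
    (hcount : M * (c + K + M * m) < K * (p - 1))
    (a : ZMod p) (S : Finset (ZMod p))
    (hS : ∀ x ∈ S, ((X * g).eval x) ^ c = a) :
    M * S.card ≤ M * m + (K + m + 1) * p := by
  classical
  have hp : p.Prime := Fact.out
  have hp2 := hp.two_le
  set f : (ZMod p)[X] := X * g with hf
  set L := c + K + M * m with hL
  -- On `S` one has `f ^ c = a` and `X ^ p = X`, so there the `ℓ`-th derivative of the auxiliary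
  -- polynomial agrees with `f ^ (M - ℓ) * Q ℓ u`, where `Q ℓ u` has degree less than `L`.
  let Q : ℕ → ((Fin d × Fin K → degreeLT (ZMod p) c) →ₗ[ZMod p] (ZMod p)[X]) := fun ℓ =>
    ∑ i : Fin d × Fin K,
      (LinearMap.mulLeft (ZMod p) (C (a ^ (i.1 : ℕ)) * X ^ (i.2 : ℕ))).comp
        ((stepW f (M + i.1 * c) ℓ).comp ((degreeLT (ZMod p) c).subtype.comp (LinearMap.proj i)))
  have hQ : ∀ ℓ u, Q ℓ u = ∑ i : Fin d × Fin K,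
      C (a ^ (i.1 : ℕ)) * X ^ (i.2 : ℕ) * stepW f (M + i.1 * c) ℓ (u i : (ZMod p)[X]) := by
    intro ℓ u
    simp [Q, mul_assoc]
  let Φ : (Fin d × Fin K → degreeLT (ZMod p) c) →ₗ[ZMod p] (Fin M × Fin L → ZMod p) :=
    LinearMap.pi (fun q => (lcoeff (ZMod p) (q.2 : ℕ)).comp (Q q.1))
  have hΦ : ∀ u q, Φ u q = (Q q.1 u).coeff (q.2 : ℕ) := fun u q => rfl
  have e := degreeLTEquiv (ZMod p) c
  have : Module.Finite (ZMod p) (degreeLT (ZMod p) c) := Module.Finite.equiv e.symm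
  have hfin : Module.finrank (ZMod p) (degreeLT (ZMod p) c) = c := by
    rw [e.finrank_eq]; simp
  -- Requiring `Q ℓ u = 0` for all `ℓ < M` imposes `M * L` linear conditions on
  -- `d * K * c = K * (p - 1)` coefficients, so a nonzero solution exists.
  have hker : LinearMap.ker Φ ≠ ⊥ := by
    apply LinearMap.ker_ne_bot_of_finrank_lt
    have e1 : Module.finrank (ZMod p) (Fin d × Fin K → degreeLT (ZMod p) c) = d * K * c := by
      rw [Module.finrank_pi_fintype]; simp [hfin]
    have e2 : Module.finrank (ZMod p) (Fin M × Fin L → ZMod p) = M * L := by simp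
    rw [e1, e2]
    calc M * L < K * (p - 1) := hcount
      _ = d * K * c := by rw [← hdc]; ring
  obtain ⟨u, hu, hu0⟩ := (Submodule.ne_bot_iff _).1 hker
  have hdeg_u : ∀ i, ((u i : (ZMod p)[X])).natDegree ≤ c - 1 := by
    intro i
    have h1 := mem_degreeLT.1 (u i).2
    by_cases h0 : (u i : (ZMod p)[X]) = 0
    · simp [h0]
    · have := (natDegree_lt_iff_degree_lt h0).2 h1
      omega
  have hQ0 : ∀ ℓ < M, Q ℓ u = 0 := by
    intro ℓ hℓ
    ext n
    by_cases hn : n < L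
    · have := congrFun (LinearMap.mem_ker.1 hu) (⟨ℓ, hℓ⟩, ⟨n, hn⟩)
      rw [hΦ] at this
      simpa using this
    · rw [coeff_zero]
      apply coeff_eq_zero_of_natDegree_lt
      refine lt_of_lt_of_le ?_ (not_lt.1 hn)
      rw [hQ]
      refine lt_of_le_of_lt (natDegree_sum_le_of_forall_le (n := c - 1 + M * m + K) _ _ ?_) ?_
      · intro i _
        refine natDegree_mul_le.trans ?_
        have h1 := stepW_natDegree f (M + i.1 * c) ℓ m hm (u i) (c - 1) (hdeg_u i)
        have h2 : ℓ * m ≤ M * m := Nat.mul_le_mul_right _ hℓ.le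
        have h3 := natDegree_C_mul_X_pow_le (a ^ (i.1 : ℕ)) (i.2 : ℕ)
        have h4 := i.2.2
        omega
      · omega
  set G : (ZMod p)[X] :=
    ∑ i : Fin d × Fin K, (u i : (ZMod p)[X]) * f ^ ((i.1 : ℕ) * c) * X ^ ((i.2 : ℕ) * p) with hG
  have hG0 : G ≠ 0 := by
    apply stepanov_ne_zero (by omega) g hg (fun i => (u i : (ZMod p)[X])) (fun i => (u i).2)
    by_contra! h
    exact hu0 (funext fun i => Subtype.ext (h i))
  have hg0 : g ≠ 0 := by rintro rfl; simp at hg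
  have hf0 : f ≠ 0 := mul_ne_zero X_ne_zero hg0
  have hR0 : f ^ M * G ≠ 0 := mul_ne_zero (pow_ne_zero _ hf0) hG0
  have hReq : f ^ M * G = ∑ i : Fin d × Fin K,
      f ^ (M + i.1 * c) * (u i : (ZMod p)[X]) * X ^ ((i.2 : ℕ) * p) := by
    rw [hG, Finset.mul_sum]
    refine Finset.sum_congr rfl fun i _ => ?_
    rw [pow_add]; ring
  have hmult : ∀ x ∈ S, M ≤ (f ^ M * G).rootMultiplicity x := by
    intro x hx
    have hlt : M - 1 < (f ^ M * G).rootMultiplicity x := by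
      apply lt_rootMultiplicity_of_isRoot_iterate_derivative_of_mem_nonZeroDivisors' hR0
      · intro ℓ hℓ
        have hℓM : ℓ < M := by omega
        rw [IsRoot, hReq, iterate_derivative_sum, eval_finsetSum]
        have hx' := hS x hx
        have hterm : ∀ i : Fin d × Fin K,
            eval x (derivative^[ℓ] (f ^ (M + i.1 * c) * (u i : (ZMod p)[X]) * X ^ ((i.2 : ℕ) * p)))
            = eval x f ^ (M - ℓ) *
              eval x (C (a ^ (i.1 : ℕ)) * X ^ (i.2 : ℕ) *
                stepW f (M + i.1 * c) ℓ (u i : (ZMod p)[X])) := by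
          intro i
          rw [stepW_iterate f _ ℓ (by omega) _ _ (by simp [derivative_X_pow])]
          have e1 : M + i.1 * c - ℓ = (M - ℓ) + c * i.1 := by rw [mul_comm c]; omega
          rw [e1, pow_add, pow_mul]
          simp only [eval_mul, eval_pow, eval_X, eval_C]
          rw [hx', mul_comm (i.2 : ℕ) p, pow_mul, ZMod.pow_card]
          ring
        rw [Finset.sum_congr rfl fun i _ => hterm i, ← Finset.mul_sum, ← eval_finsetSum, ← hQ,
          hQ0 ℓ hℓM]
        simp
      · intro n hn hn0
        rw [mem_nonZeroDivisors_iff_ne_zero, Ne, ZMod.natCast_eq_zero_iff]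
        exact fun h => absurd (Nat.le_of_dvd (Nat.pos_of_ne_zero hn0) h) (by omega)
    omega
  refine (card_mul_le_natDegree _ hR0 S M hmult).trans ?_
  rw [hReq]
  refine natDegree_sum_le_of_forall_le _ _ ?_
  intro i _
  refine natDegree_mul_le.trans ?_
  have h1 : (f ^ (M + i.1 * c) * (u i : (ZMod p)[X])).natDegree ≤ (M + i.1 * c) * m + (c - 1) :=
    natDegree_mul_le.trans (add_le_add (natDegree_pow_le.trans
      (Nat.mul_le_mul_left _ hm)) (hdeg_u i))
  have h2 : (X ^ ((i.2 : ℕ) * p) : (ZMod p)[X]).natDegree ≤ K * p := by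
    rw [natDegree_X_pow]; exact Nat.mul_le_mul_right _ i.2.2.le
  have h3 : (i.1 : ℕ) * c ≤ p := by
    have : (i.1 : ℕ) * c ≤ d * c := Nat.mul_le_mul_right _ i.1.2.le
    omega
  have h4 : c ≤ p := by
    have : 1 ≤ d := by
      rcases Nat.eq_zero_or_pos d with h | h
      · subst h; omega
      · exact h
    nlinarith [Nat.sub_le p 1]
  have h5 := Nat.mul_le_mul_right m h3
  have h6 : (K + m + 1) * p = K * p + p * m + p := by ring
  have h7 : (M + i.1 * c) * m = M * m + i.1 * c * m := by ring
  omega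

open Polynomial in
/-- Stepanov's bound: if `f = X * g` has a simple zero at `0`, the number of `x` with
`f x ^ c = a`, where `d * c = p - 1`, exceeds `p / d` by at most `O(√p)`. -/
lemma stepanov {p : ℕ} [Fact p.Prime] {d c m : ℕ} (hp100 : 100 ≤ p)
    (hdc : d * c = p - 1) (g : (ZMod p)[X]) (hg : g.eval 0 ≠ 0)
    (hm : (X * g).natDegree ≤ m)
    (a : ZMod p) (S : Finset (ZMod p))
    (hS : ∀ x ∈ S, ((X * g).eval x) ^ c = a) :
    (S.card : ℝ) ≤ p / d + (7 * m + 10) * √p := by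
  have hc : 1 ≤ c := by
    rcases Nat.eq_zero_or_pos c with h | h
    · subst h; omega
    · exact h
  have hd : 1 ≤ d := by
    rcases Nat.eq_zero_or_pos d with h | h
    · subst h; omega
    · exact h
  -- `M ≈ √p` balances the terms `M * m` and `K * p / M`; `K` is the least convenient value for which
  -- the linear system has more unknowns than equations.
  set M := Nat.sqrt p with hM
  have hM10 : 10 ≤ M := Nat.le_sqrt.2 (by omega)
  have hMM : M * M ≤ p := Nat.sqrt_le p
  have hMM2 : p < (M + 1) * (M + 1) := Nat.lt_succ_sqrt p
  have hMp : 10 * M ≤ p := (Nat.mul_le_mul_right _ hM10).trans hMM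
  set K := M / d + (2 * m + 4) with hK
  have hKd : M + d * (2 * m + 3) ≤ K * d := by
    have := Nat.div_add_mod M d
    have h2 := Nat.mod_lt M hd
    have : K * d = d * (M / d) + d * (2 * m + 3) + d := by rw [hK]; ring
    omega
  have hcount : M * (c + K + M * m) < K * (p - 1) := by
    have h1 : (M + d * (2 * m + 3)) * c ≤ K * (p - 1) := by
      calc _ ≤ K * d * c := Nat.mul_le_mul_right _ hKd
        _ = _ := by rw [mul_assoc, hdc]
    have h2 : (M + d * (2 * m + 3)) * c = M * c + (2 * m + 3) * (p - 1) := by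
      rw [← hdc]; ring
    have hKM : K ≤ M + (2 * m + 4) := by
      have := Nat.div_le_self M d; omega
    have h3 : M * K ≤ p + M * (2 * m + 4) := by
      calc M * K ≤ M * (M + (2 * m + 4)) := Nat.mul_le_mul_left _ hKM
        _ = M * M + M * (2 * m + 4) := by ring
        _ ≤ _ := by omega
    have h4 : M * (M * m) ≤ p * m := by
      rw [← mul_assoc]; exact Nat.mul_le_mul_right _ hMM
    have h5 : 10 * (M * (2 * m + 4)) ≤ p * (2 * m + 4) := by
      rw [← mul_assoc]; exact Nat.mul_le_mul_right _ hMp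
    have h6 : M * (c + K + M * m) = M * c + M * K + M * (M * m) := by ring
    obtain ⟨q, rfl⟩ : ∃ q, p = q + 1 := ⟨p - 1, by omega⟩
    simp only [Nat.add_sub_cancel] at *
    nlinarith
  have hraw := stepanov_raw hc hdc g hg hm (by omega) (by omega) hcount a S hS
  have hraw' : (M : ℝ) * S.card ≤ M * m + (K + m + 1) * p := by exact_mod_cast hraw
  have hKR : (K : ℝ) ≤ M / d + (2 * m + 4) := by
    rw [hK]; push_cast
    have := @Nat.cast_div_le ℝ _ _ _ M d
    linarith
  have hMR : (10 : ℝ) ≤ M := by exact_mod_cast hM10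
  have hsq : √(p : ℝ) ≤ M + 1 := by
    rw [Real.sqrt_le_left (by positivity)]
    have : (p : ℝ) < (M + 1) * (M + 1) := by exact_mod_cast hMM2
    nlinarith
  have hsqp : √(p : ℝ) * √p = p := Real.mul_self_sqrt (by positivity)
  have hs0 : (1 : ℝ) ≤ √(p : ℝ) := by
    rw [Real.one_le_sqrt]; exact_mod_cast (by omega : 1 ≤ p)
  have hM0 : (0 : ℝ) < M := by linarith
  have hmR : (0 : ℝ) ≤ m := by positivity
  have h8 : (p : ℝ) ≤ 2 * M * √p := by nlinarith
  have h9 : (M : ℝ) * S.card ≤ M * (p / d + (7 * m + 10) * √p) := by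
    calc (M : ℝ) * S.card ≤ M * m + (K + m + 1) * p := hraw'
      _ ≤ M * m + (M / d + (2 * m + 4) + m + 1) * p := by gcongr
      _ = M * (p / d) + (M * m + (3 * m + 5) * p) := by ring
      _ ≤ M * (p / d) + (M * m * √p + (3 * m + 5) * (2 * M * √p)) := by
        have h10 : (M : ℝ) * m ≤ M * m * √p := le_mul_of_one_le_right (by positivity) hs0
        have h11 : (3 * m + 5) * (p : ℝ) ≤ (3 * m + 5) * (2 * M * √p) :=
          mul_le_mul_of_nonneg_left h8 (by positivity)
        linarith
      _ = _ := by ring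
  exact le_of_mul_le_mul_left h9 hM0

/-! ### Weil's bound and moments of character sums -/

/-- With `g` a generator of `(ZMod p)ˣ` and `d` the order of `χ`, the value `χ y` and the power
`y ^ ((p - 1) / d)` are both determined by the discrete logarithm of `y` modulo `d`. -/
lemma exists_dlog {p : ℕ} [Fact p.Prime] (χ : MulChar (ZMod p) ℂ) {d c : ℕ} (hd : 0 < d)
    (hχd : χ ^ d = 1) (hdc : d * c = p - 1) :
    ∃ g : (ZMod p)ˣ, (∀ x : (ZMod p)ˣ, x ∈ Subgroup.zpowers g) ∧ ∀ y : ZMod p, ∃ k : ℕ,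
      y ≠ 0 → k < d ∧ y ^ c = ((g : ZMod p) ^ k) ^ c ∧ χ y = χ g ^ k := by
  obtain ⟨g, hg⟩ := IsCyclic.exists_generator (α := (ZMod p)ˣ)
  refine ⟨g, hg, fun y => ?_⟩
  by_cases hy : y = 0
  · exact ⟨0, fun h => absurd hy h⟩
  obtain ⟨n, hn⟩ := (mem_powers_iff_mem_zpowers.2 (hg (Units.mk0 y hy)))
  simp only at hn
  have hy' : y = (g : ZMod p) ^ n := by
    have := congrArg Units.val hn
    simpa using this.symm
  have hgp : (g : ZMod p) ^ (d * c) = 1 := by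
    rw [hdc]; exact ZMod.pow_card_sub_one_eq_one g.ne_zero
  have hχg : χ g ^ d = 1 := by
    rw [← MulChar.pow_apply_coe, hχd, MulChar.one_apply_coe]
  refine ⟨n % d, fun _ => ⟨Nat.mod_lt _ hd, ?_, ?_⟩⟩
  · rw [hy']
    conv_lhs => rw [← Nat.div_add_mod n d]
    rw [pow_add, mul_pow]
    have : (((g : ZMod p) ^ (d * (n / d))) ^ c) = 1 := by
      rw [← pow_mul, mul_assoc, mul_comm (n / d), ← mul_assoc, pow_mul, hgp, one_pow]
    rw [this, one_mul]
  · rw [hy', map_pow]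
    conv_lhs => rw [← Nat.div_add_mod n d]
    rw [pow_add, pow_mul, hχg, one_pow, one_mul]

open Polynomial in
/-- Weil's bound for a polynomial with a simple zero at `0`, with a constant depending on the
degree of the polynomial and the order of the character. -/
lemma weil_zero {p : ℕ} [Fact p.Prime] (hp100 : 100 ≤ p) (χ : MulChar (ZMod p) ℂ) {d m : ℕ}
    (hχ : χ ≠ 1) (hd : orderOf χ = d) (hdp : d ∣ p - 1)
    (g : (ZMod p)[X]) (hg : g.eval 0 ≠ 0) (hm : (X * g).natDegree ≤ m) :
    ‖∑ x, χ ((X * g).eval x)‖ ≤ d * (8 * m + 10) * √p := by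
  classical
  obtain ⟨c, hdc⟩ := hdp
  have hd0 : 0 < d := by
    rcases Nat.eq_zero_or_pos d with h | h
    · subst h; omega
    · exact h
  set f := X * g with hf
  have hf0 : f ≠ 0 := by
    refine mul_ne_zero X_ne_zero ?_
    rintro rfl; simp at hg
  have hχd : χ ^ d = 1 := by rw [← hd]; exact pow_orderOf_eq_one χ
  obtain ⟨γ, hγ, hk⟩ := exists_dlog χ hd0 hχd hdc.symm
  choose k hk using hk
  set ω := χ γ with hω
  have hωd : ω ^ d = 1 := by
    rw [hω, ← MulChar.pow_apply_coe, hχd, MulChar.one_apply_coe]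
  have hω1 : ω ≠ 1 := by
    intro h
    exact hχ ((MulChar.eq_iff hγ χ 1).2 (by rw [MulChar.one_apply_coe]; exact h))
  have hωn : ‖ω‖ = 1 := Complex.norm_eq_one_of_pow_eq_one hωd hd0.ne'
  have hgeom : ∑ j ∈ Finset.range d, ω ^ j = 0 := by
    rw [geom_sum_eq hω1, hωd]; simp
  set U : Finset (ZMod p) := Finset.univ.filter (fun x => f.eval x ≠ 0) with hU
  let N : ℕ → ℕ := fun j => (U.filter (fun x => k (f.eval x) = j)).card
  have hmaps : ∀ x ∈ U, k (f.eval x) ∈ Finset.range d := by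
    intro x hx
    simp only [hU, Finset.mem_filter] at hx
    exact Finset.mem_range.2 (hk _ hx.2).1
  have hsum : ∑ x, χ (f.eval x) = ∑ j ∈ Finset.range d, (N j : ℂ) * ω ^ j := by
    have h1 : ∑ x, χ (f.eval x) = ∑ x ∈ U, ω ^ k (f.eval x) := by
      rw [hU, Finset.sum_filter]
      refine Finset.sum_congr rfl fun x _ => ?_
      by_cases h : f.eval x = 0
      · simp [h, MulChar.map_zero]
      · simp only [ne_eq, h, not_false_eq_true, if_true]
        exact (hk _ h).2.2
    rw [h1, ← Finset.sum_fiberwise_of_maps_to hmaps]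
    refine Finset.sum_congr rfl fun j _ => ?_
    rw [Finset.sum_congr rfl (g := fun _ => ω ^ j)
      (fun x hx => by rw [(Finset.mem_filter.1 hx).2])]
    simp [N]
  have hNsum : ∑ j ∈ Finset.range d, N j = U.card :=
    (Finset.card_eq_sum_card_fiberwise hmaps).symm
  have hUcard : (p : ℝ) - m ≤ U.card := by
    have h1 : (Finset.univ.filter (fun x => ¬ f.eval x ≠ 0)).card ≤ m := by
      refine le_trans ?_ ((card_roots' f).trans hm)
      refine le_trans (Finset.card_le_card (t := f.roots.toFinset) ?_) (Multiset.toFinset_card_le _)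
      intro x hx
      simp only [ne_eq, not_not, Finset.mem_filter, Finset.mem_univ, true_and] at hx
      simp [hf0, hx]
    have h2 := Finset.card_filter_add_card_filter_not (s := (Finset.univ : Finset (ZMod p)))
      (fun x => f.eval x ≠ 0)
    rw [Finset.card_univ, ZMod.card] at h2
    have h3 : (p : ℝ) ≤ U.card + m := by
      have : p ≤ U.card + m := h2.symm.le.trans (Nat.add_le_add_left h1 _)
      exact_mod_cast this
    linarith
  set P : ℝ := p / d + (7 * m + 10) * √p with hP
  have hNP : ∀ j, (N j : ℝ) ≤ P := by
    intro j
    refine stepanov hp100 hdc.symm g hg hm (((γ : ZMod p) ^ j) ^ c) _ ?_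
    intro x hx
    simp only [hU, Finset.mem_filter, Finset.mem_univ, true_and] at hx
    have := (hk _ hx.1).2.1
    rw [hx.2] at this
    exact this
  -- As `∑ j, ω ^ j = 0`, the fibre counts `N j` may be replaced by `P - N j`, which are nonnegative
  -- by Stepanov's upper bound. Hence an upper bound for each fibre already bounds the sum.
  have hrew : ∑ x, χ (f.eval x) = - ∑ j ∈ Finset.range d, ((P - N j : ℝ) : ℂ) * ω ^ j := by
    rw [hsum]
    have : ∑ j ∈ Finset.range d, ((P - N j : ℝ) : ℂ) * ω ^ j
        = (P : ℂ) * ∑ j ∈ Finset.range d, ω ^ j - ∑ j ∈ Finset.range d, (N j : ℂ) * ω ^ j := by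
      rw [Finset.mul_sum, ← Finset.sum_sub_distrib]
      refine Finset.sum_congr rfl fun j _ => ?_
      push_cast; ring
    rw [this, hgeom]; ring
  rw [hrew, norm_neg]
  have hs0 : (1 : ℝ) ≤ √(p : ℝ) := by
    rw [Real.one_le_sqrt]; exact_mod_cast (by omega : 1 ≤ p)
  have hdR : (1 : ℝ) ≤ d := by exact_mod_cast hd0
  calc ‖∑ j ∈ Finset.range d, ((P - N j : ℝ) : ℂ) * ω ^ j‖
      ≤ ∑ j ∈ Finset.range d, ‖((P - N j : ℝ) : ℂ) * ω ^ j‖ := norm_sum_le _ _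
    _ = ∑ j ∈ Finset.range d, (P - N j) := by
        refine Finset.sum_congr rfl fun j _ => ?_
        rw [norm_mul, norm_pow, hωn, one_pow, mul_one, Complex.norm_real,
          Real.norm_of_nonneg (sub_nonneg.2 (hNP j))]
    _ = d * P - U.card := by
        rw [Finset.sum_sub_distrib, ← hNsum]; simp
    _ ≤ d * P - (p - m) := by linarith
    _ = d * (7 * m + 10) * √p + m := by
        rw [hP]; field_simp; ring
    _ ≤ d * (8 * m + 10) * √p := by
        have : (m : ℝ) ≤ d * m * √p := by
          have h1 : (m : ℝ) ≤ d * m := le_mul_of_one_le_left (by positivity) hdR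
          exact h1.trans (le_mul_of_one_le_right (by positivity) hs0)
        linarith

open Polynomial in
/-- Weil's bound for products of shifts `χ (x + β i) ^ e i` in which one shift `β i₀` occurs
exactly once. -/
lemma weil_shifts {p : ℕ} [Fact p.Prime] (hp100 : 100 ≤ p) (χ : MulChar (ZMod p) ℂ) {d m : ℕ}
    (hχ : χ ≠ 1) (hd : orderOf χ = d) (hdp : d ∣ p - 1)
    {ι : Type*} [Fintype ι] [DecidableEq ι] (β : ι → ZMod p) (e : ι → ℕ) (i₀ : ι) (he : e i₀ = 1)
    (hβ : ∀ i, i ≠ i₀ → β i ≠ β i₀) (hm : ∑ i, e i ≤ m) :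
    ‖∑ x, ∏ i, χ (x + β i) ^ e i‖ ≤ d * (8 * m + 10) * √p := by
  set g : (ZMod p)[X] := ∏ i ∈ Finset.univ.erase i₀, (X + C (β i - β i₀)) ^ e i with hg
  have hfe : X * g = ∏ i, (X + C (β i - β i₀)) ^ e i := by
    rw [hg, ← Finset.mul_prod_erase Finset.univ _ (Finset.mem_univ i₀), he]
    simp
  have h1 := weil_zero hp100 χ (m := m) hχ hd hdp g ?_ ?_
  · rw [← Equiv.sum_comp (Equiv.addRight (-β i₀))]
    have h2 : ∀ x : ZMod p, ∏ i, χ (Equiv.addRight (-β i₀) x + β i) ^ e i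
        = χ ((X * g).eval x) := by
      intro x
      rw [hfe, eval_prod, map_prod]
      refine Finset.prod_congr rfl fun i _ => ?_
      simp only [Equiv.coe_addRight, eval_pow, eval_add, eval_X, eval_C, map_pow]
      congr 2; ring
    simp_rw [h2]
    exact h1
  · rw [hg, eval_prod, Finset.prod_ne_zero_iff]
    intro i hi
    simp only [eval_pow, eval_add, eval_X, eval_C, zero_add]
    exact pow_ne_zero _ (sub_ne_zero.2 (hβ i (Finset.ne_of_mem_erase hi)))
  · rw [hfe]
    refine (natDegree_prod_le _ _).trans (le_trans (Finset.sum_le_sum fun i _ => ?_) hm)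
    refine natDegree_pow_le.trans ?_
    rw [natDegree_X_add_C, mul_one]

/-- Lets conjugated factors `χ⁻¹` be written as powers of `χ`, so that `weil_shifts` applies. -/
lemma mulChar_pow_sub_one {p : ℕ} [Fact p.Prime] (χ : MulChar (ZMod p) ℂ) {d : ℕ} (hd : 2 ≤ d)
    (hχd : χ ^ d = 1) (y : ZMod p) : χ y ^ (d - 1) = χ⁻¹ y := by
  rw [← MulChar.pow_apply' χ (by omega : d - 1 ≠ 0)]
  congr 1
  rw [eq_comm, inv_eq_iff_mul_eq_one, ← pow_succ', Nat.sub_add_cancel (by omega), hχd]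

/-- There are few tuples of length `2 * r` in which no value is attained exactly once: such a tuple
takes at most `r` values, hence factors through `Fin r`. -/
lemma card_bad {α : Type*} [DecidableEq α] (s : Finset α) (r : ℕ) (hr : 1 ≤ r) :
    ((Fintype.piFinset (fun _ : Fin r ⊕ Fin r => s)).filter
      (fun t => ∀ i, ∃ j, j ≠ i ∧ t j = t i)).card ≤ s.card ^ r * r ^ (2 * r) := by
  classical
  have : s.card ^ r * r ^ (2 * r) = ((Fintype.piFinset (fun _ : Fin r => s)) ×ˢ
      (Finset.univ : Finset (Fin r ⊕ Fin r → Fin r))).card := by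
    rw [Finset.card_product, Fintype.card_piFinset]
    simp [two_mul]
  rw [this]
  refine Finset.card_le_card_of_surjOn (fun q i => q.1 (q.2 i)) ?_
  intro t ht
  simp only [Finset.coe_filter, Fintype.mem_piFinset, Set.mem_ofPred_eq] at ht
  obtain ⟨hts, ht⟩ := ht
  have hcard : (Finset.univ.image t).card ≤ r := by
    have h1 : (Finset.univ.image t).card * 2 ≤ (Finset.univ : Finset (Fin r ⊕ Fin r)).card := by
      rw [Finset.card_eq_sum_card_image t Finset.univ, ← smul_eq_mul]
      refine Finset.card_nsmul_le_sum _ _ _ fun a ha => ?_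
      obtain ⟨i, _, rfl⟩ := Finset.mem_image.1 ha
      obtain ⟨j, hji, hj⟩ := ht i
      exact Finset.one_lt_card.2 ⟨i, by simp, j, by simp [hj], hji.symm⟩
    simp at h1
    omega
  have hne : Nonempty (Finset.univ.image t) :=
    ⟨⟨t (Sum.inl ⟨0, hr⟩), Finset.mem_image_of_mem _ (Finset.mem_univ _)⟩⟩
  obtain ⟨em⟩ := Function.Embedding.nonempty_of_card_le
    (α := (Finset.univ.image t)) (β := Fin r) (by simpa using hcard)
  let e : Fin r ⊕ Fin r → Fin r := fun i => em ⟨t i, Finset.mem_image_of_mem _ (Finset.mem_univ _)⟩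
  refine ⟨(fun k => ((Function.invFun em k : Finset.univ.image t) : α), e), ?_, ?_⟩
  · simp only [Finset.coe_product, Set.mem_prod, Finset.mem_coe, Fintype.mem_piFinset,
      Finset.mem_univ, and_true]
    intro k
    obtain ⟨i, _, hi⟩ := Finset.mem_image.1 (Function.invFun em k).2
    rw [← hi]; exact hts i
  · funext i
    simp only [e]
    rw [Function.leftInverse_invFun em.injective]

/-- The moment estimate behind Burgess's bound. Expand the power: a tuple of shifts in which some
shift occurs exactly once contributes `O(√p)` by `weil_shifts`, and there are few other tuples. -/
lemma moment {p : ℕ} [Fact p.Prime] (hp100 : 100 ≤ p) (χ : MulChar (ZMod p) ℂ) {d r : ℕ}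
    (hχ : χ ≠ 1) (hd : orderOf χ = d) (hdp : d ∣ p - 1) (hr : 1 ≤ r) (s : Finset (ZMod p)) :
    ∑ x, ‖∑ b ∈ s, χ (x + b)‖ ^ (2 * r)
      ≤ (s.card : ℝ) ^ r * r ^ (2 * r) * p + s.card ^ (2 * r) * (d * (8 * (r * d : ℕ) + 10) * √p) := by
  classical
  have hd2 : 2 ≤ d := by
    have h1 : d ≠ 1 := fun h => hχ (orderOf_eq_one_iff.1 (hd.trans h))
    have h0 : d ≠ 0 := by
      rintro rfl
      have := Nat.eq_zero_of_zero_dvd hdp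
      omega
    omega
  have hχd : χ ^ d = 1 := by rw [← hd]; exact pow_orderOf_eq_one χ
  have hnorm : ∀ (ψ : MulChar (ZMod p) ℂ) y, ψ ^ d = 1 → ‖ψ y‖ ≤ 1 := by
    intro ψ y hψ
    by_cases hy : IsUnit y
    · obtain ⟨y, rfl⟩ := hy
      refine (Complex.norm_eq_one_of_pow_eq_one (n := d) ?_ (by omega)).le
      rw [← MulChar.pow_apply_coe, hψ, MulChar.one_apply_coe]
    · rw [MulChar.map_nonunit _ hy]; simp
  have hχid : (χ⁻¹) ^ d = 1 := by rw [inv_pow, hχd, inv_one]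
  have hi1 : χ⁻¹ ≠ 1 := by rwa [Ne, inv_eq_one]
  have hio : orderOf χ⁻¹ = d := by rw [orderOf_inv, hd]
  let T : ZMod p → (Fin r ⊕ Fin r → ZMod p) → ℂ := fun x t =>
    (∏ i, χ (x + t (Sum.inl i))) * ∏ i, χ⁻¹ (x + t (Sum.inr i))
  have hexp : ∀ x, ((‖∑ b ∈ s, χ (x + b)‖ ^ (2 * r) : ℝ) : ℂ)
      = ∑ t ∈ Fintype.piFinset (fun _ : Fin r ⊕ Fin r => s), T x t := by
    intro x
    have h1 := Finset.prod_univ_sum (fun _ : Fin r ⊕ Fin r => s)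
      (fun i b => Sum.elim (fun _ => χ (x + b)) (fun _ => χ⁻¹ (x + b)) i)
    have h2 : ∑ t ∈ Fintype.piFinset (fun _ : Fin r ⊕ Fin r => s), T x t
        = (∑ b ∈ s, χ (x + b)) ^ r * (∑ b ∈ s, χ⁻¹ (x + b)) ^ r := by
      simp only [Fintype.prod_sum_type, Sum.elim_inl, Sum.elim_inr, Finset.prod_const,
        Finset.card_univ, Fintype.card_fin] at h1
      exact h1.symm
    rw [h2, ← mul_pow, pow_mul]
    have h3 : ∑ b ∈ s, χ⁻¹ (x + b) = (starRingEnd ℂ) (∑ b ∈ s, χ (x + b)) := by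
      rw [map_sum]
      refine Finset.sum_congr rfl fun b _ => ?_
      exact (MulChar.star_apply' χ _).symm
    rw [h3, Complex.mul_conj']
    push_cast
    rfl
  have hkey : (∑ x, ‖∑ b ∈ s, χ (x + b)‖ ^ (2 * r) : ℝ)
      ≤ ∑ t ∈ Fintype.piFinset (fun _ : Fin r ⊕ Fin r => s), ‖∑ x, T x t‖ := by
    have h1 : ((∑ x, ‖∑ b ∈ s, χ (x + b)‖ ^ (2 * r) : ℝ) : ℂ)
        = ∑ t ∈ Fintype.piFinset (fun _ : Fin r ⊕ Fin r => s), ∑ x, T x t := by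
      rw [Complex.ofReal_sum, Finset.sum_congr rfl fun x _ => hexp x, Finset.sum_comm]
    have h2 : (0 : ℝ) ≤ ∑ x, ‖∑ b ∈ s, χ (x + b)‖ ^ (2 * r) := by positivity
    rw [← Real.norm_of_nonneg h2, ← Complex.norm_real, h1]
    exact norm_sum_le _ _
  refine hkey.trans ?_
  rw [← Finset.sum_filter_add_sum_filter_not _ (fun t => ∀ i, ∃ j, j ≠ i ∧ t j = t i)]
  refine add_le_add ?_ ?_
  · have h1 : ∀ t, ‖∑ x, T x t‖ ≤ p := by
      intro t
      refine (norm_sum_le _ _).trans ?_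
      have : ∀ x ∈ (Finset.univ : Finset (ZMod p)), ‖T x t‖ ≤ 1 := by
        intro x _
        simp only [T, norm_mul, norm_prod]
        exact mul_le_one₀ (Finset.prod_le_one (fun _ _ => norm_nonneg _) fun i _ => hnorm _ _ hχd)
          (Finset.prod_nonneg fun _ _ => norm_nonneg _)
          (Finset.prod_le_one (fun _ _ => norm_nonneg _) fun i _ => hnorm _ _ hχid)
      refine (Finset.sum_le_card_nsmul _ _ _ this).trans ?_
      simp [ZMod.card]
    refine (Finset.sum_le_card_nsmul _ _ _ fun t _ => h1 t).trans ?_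
    rw [nsmul_eq_mul]
    have h2 : (((Fintype.piFinset (fun _ : Fin r ⊕ Fin r => s)).filter
      (fun t => ∀ i, ∃ j, j ≠ i ∧ t j = t i)).card : ℝ) ≤ s.card ^ r * r ^ (2 * r) := by
      exact_mod_cast card_bad s r hr
    gcongr
  · have h1 : ∀ t ∈ (Fintype.piFinset (fun _ : Fin r ⊕ Fin r => s)).filter
        (fun t => ¬ ∀ i, ∃ j, j ≠ i ∧ t j = t i),
        ‖∑ x, T x t‖ ≤ d * (8 * (r * d : ℕ) + 10) * √p := by
      intro t ht
      have ht2 := (Finset.mem_filter.1 ht).2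
      push Not at ht2
      obtain ⟨i₀, hi₀⟩ := ht2
      have hrd : r + r * (d - 1) = r * d := by
        obtain ⟨q, rfl⟩ : ∃ q, d = q + 1 := ⟨d - 1, by omega⟩
        simp; ring
      rcases hcase : i₀ with i | i
      · have := weil_shifts hp100 χ (m := r * d) hχ hd hdp t
          (Sum.elim (fun _ => 1) (fun _ => d - 1)) i₀ (by rw [hcase]; rfl) hi₀
          (by simp; omega)
        simpa [Fintype.prod_sum_type, mulChar_pow_sub_one χ hd2 hχd, T] using this
      · have := weil_shifts hp100 χ⁻¹ (m := r * d) hi1 hio hdp t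
          (Sum.elim (fun _ => d - 1) (fun _ => 1)) i₀ (by rw [hcase]; rfl) hi₀
          (by simp; omega)
        simpa [Fintype.prod_sum_type, mulChar_pow_sub_one χ⁻¹ hd2 hχid, T] using this
    refine (Finset.sum_le_card_nsmul _ _ _ h1).trans ?_
    rw [nsmul_eq_mul]
    have h2 : (((Fintype.piFinset (fun _ : Fin r ⊕ Fin r => s)).filter
      (fun t => ¬ ∀ i, ∃ j, j ≠ i ∧ t j = t i)).card : ℝ) ≤ s.card ^ (2 * r) := by
      have : ((Fintype.piFinset (fun _ : Fin r ⊕ Fin r => s)).filter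
        (fun t => ¬ ∀ i, ∃ j, j ≠ i ∧ t j = t i)).card ≤ s.card ^ (2 * r) := by
        refine (Finset.card_filter_le _ _).trans ?_
        rw [Fintype.card_piFinset]
        simp [two_mul]
      exact_mod_cast this
    gcongr

/-! ### Burgess's inequality -/

/-- A fraction `n / a` is determined by its reduced form, so few quadruples satisfy
`n * a' = n' * a`. -/
lemma card_quad (A N : ℕ) :
    ((((Finset.Icc 1 A ×ˢ Finset.Icc 1 N) ×ˢ (Finset.Icc 1 A ×ˢ Finset.Icc 1 N)).filter
      (fun q => q.1.2 * q.2.1 = q.2.2 * q.1.1)).card : ℝ) ≤ A * N * (1 + Real.log A) ^ 2 := by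
  classical
  -- If `n / a = n' / a' = x / y` in lowest terms, then `(a, n) = (k y, k x)`
  -- and `(a', n') = (l y, l x)`.
  have hsub : ((Finset.Icc 1 A ×ˢ Finset.Icc 1 N) ×ˢ (Finset.Icc 1 A ×ˢ Finset.Icc 1 N)).filter
      (fun q => q.1.2 * q.2.1 = q.2.2 * q.1.1) ⊆
      (Finset.Icc 1 A ×ˢ Finset.Icc 1 A).biUnion (fun kl =>
        (Finset.Icc 1 (A / max kl.1 kl.2) ×ˢ Finset.Icc 1 (N / max kl.1 kl.2)).image
          (fun yx => ((kl.1 * yx.1, kl.1 * yx.2), (kl.2 * yx.1, kl.2 * yx.2)))) := by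
    rintro ⟨⟨a, n⟩, ⟨a', n'⟩⟩ h
    simp only [Finset.mem_filter, Finset.mem_product, Finset.mem_Icc] at h
    obtain ⟨⟨⟨⟨ha1, haA⟩, hn1, hnN⟩, ⟨ha1', haA'⟩, hn1', hnN'⟩, heq⟩ := h
    have hk : 0 < Nat.gcd n a := Nat.gcd_pos_of_pos_left _ hn1
    obtain ⟨k, x, y, hk0, hcop, hx, hy⟩ : ∃ k x y, 0 < k ∧ Nat.Coprime x y ∧ n = x * k ∧ a = y * k :=
      ⟨_, Nat.exists_coprime n a |>.choose, (Nat.exists_coprime n a).choose_spec.choose, hk,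
        (Nat.exists_coprime n a).choose_spec.choose_spec⟩
    subst hx hy
    have hx0 : 0 < x := by
      rcases Nat.eq_zero_or_pos x with h0 | h0
      · subst h0; simp at hn1
      · exact h0
    have hy0 : 0 < y := by
      rcases Nat.eq_zero_or_pos y with h0 | h0
      · subst h0; simp at ha1
      · exact h0
    have heq2 : x * a' = n' * y := by
      apply Nat.eq_of_mul_eq_mul_right hk0
      linarith
    obtain ⟨l, hl⟩ : x ∣ n' := hcop.dvd_of_dvd_mul_right (Dvd.intro _ heq2)
    subst hl
    have ha' : a' = l * y := by
      apply Nat.eq_of_mul_eq_mul_left hx0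
      linarith
    subst ha'
    have hl0 : 0 < l := by
      rcases Nat.eq_zero_or_pos l with h0 | h0
      · subst h0; simp at ha1'
      · exact h0
    simp only [Finset.mem_biUnion, Finset.mem_product, Finset.mem_Icc, Finset.mem_image,
      Prod.mk.injEq, Prod.exists]
    refine ⟨k, l, ⟨⟨hk0, le_trans (Nat.le_mul_of_pos_left _ hy0) haA⟩, hl0,
      le_trans (Nat.le_mul_of_pos_right _ hy0) haA'⟩, y, x, ⟨⟨hy0, ?_⟩, hx0, ?_⟩,
      ⟨mul_comm _ _, mul_comm _ _⟩, rfl, mul_comm _ _⟩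
    · rw [Nat.le_div_iff_mul_le (by positivity)]
      rcases max_choice k l with h | h <;> rw [h]
      · exact haA
      · rwa [mul_comm]
    · rw [Nat.le_div_iff_mul_le (by positivity)]
      rcases max_choice k l with h | h <;> rw [h]
      · exact hnN
      · exact hnN'
  have h1 : ((((Finset.Icc 1 A ×ˢ Finset.Icc 1 N) ×ˢ (Finset.Icc 1 A ×ˢ Finset.Icc 1 N)).filter
      (fun q => q.1.2 * q.2.1 = q.2.2 * q.1.1)).card : ℝ) ≤
      ∑ kl ∈ Finset.Icc 1 A ×ˢ Finset.Icc 1 A, ((A : ℝ) * N) * ((kl.1 : ℝ)⁻¹ * (kl.2 : ℝ)⁻¹) := by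
    refine le_trans (Nat.cast_le.2 ((Finset.card_le_card hsub).trans Finset.card_biUnion_le)) ?_
    push_cast
    refine Finset.sum_le_sum fun kl hkl => ?_
    simp only [Finset.mem_product, Finset.mem_Icc] at hkl
    have hk : (0 : ℝ) < kl.1 := by exact_mod_cast hkl.1.1
    have hl : (0 : ℝ) < kl.2 := by exact_mod_cast hkl.2.1
    refine le_trans (Nat.cast_le.2 Finset.card_image_le) ?_
    rw [Finset.card_product, Nat.card_Icc, Nat.card_Icc]
    simp only [Nat.add_sub_cancel]
    push_cast
    have e1 : ((A / max kl.1 kl.2 : ℕ) : ℝ) ≤ A / kl.1 := by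
      refine Nat.cast_div_le.trans ?_
      gcongr
      exact le_max_left _ _
    have e2 : ((N / max kl.1 kl.2 : ℕ) : ℝ) ≤ N / kl.2 := by
      refine Nat.cast_div_le.trans ?_
      gcongr
      exact le_max_right _ _
    calc _ ≤ (A / kl.1 : ℝ) * (N / kl.2) := by gcongr
      _ = _ := by field_simp
  refine h1.trans ?_
  rw [← Finset.mul_sum, Finset.sum_product]
  dsimp only
  rw [← Finset.sum_mul_sum, ← sq]
  have h2 : ∑ i ∈ Finset.Icc 1 A, (i : ℝ)⁻¹ ≤ 1 + Real.log A := by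
    have := harmonic_le_one_add_log A
    rw [harmonic_eq_sum_Icc] at this
    push_cast at this
    exact this
  gcongr

/-- Hölder's inequality for a sum over `P` sorted along the fibres of `φ`. The middle factor is the
second moment of the fibre sizes. -/
lemma holder_fiber {α β : Type*} [Fintype β] [DecidableEq β] (P : Finset α)
    (φ : α → β) (h : β → ℝ) (hh : ∀ x, 0 ≤ h x) (r : ℕ) (hr : 1 ≤ r) :
    (∑ q ∈ P, h (φ q)) ^ (2 * r) ≤ (P.card : ℝ) ^ (2 * r - 2) *
      ((P ×ˢ P).filter (fun q => φ q.1 = φ q.2)).card * ∑ x, h x ^ (2 * r) := by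
  classical
  obtain ⟨n, rfl⟩ : ∃ n, r = n + 1 := ⟨r - 1, by omega⟩
  have h1 : (∑ q ∈ P, h (φ q)) ^ (n + 1) ≤ (P.card : ℝ) ^ n * ∑ q ∈ P, h (φ q) ^ (n + 1) :=
    pow_sum_le_card_mul_sum_pow (fun q _ => hh _) n
  let ν : β → ℝ := fun x => (P.filter (fun q => φ q = x)).card
  have h2 : ∑ q ∈ P, h (φ q) ^ (n + 1) = ∑ x, ν x * h x ^ (n + 1) := by
    rw [← Finset.sum_fiberwise P φ]
    refine Finset.sum_congr rfl fun x _ => ?_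
    rw [Finset.sum_congr rfl (g := fun _ => h x ^ (n + 1))
      (fun q hq => by rw [(Finset.mem_filter.1 hq).2])]
    simp [ν]
  have h3 : (∑ x, ν x * h x ^ (n + 1)) ^ 2 ≤ (∑ x, ν x ^ 2) * ∑ x, (h x ^ (n + 1)) ^ 2 :=
    Finset.sum_mul_sq_le_sq_mul_sq _ _ _
  have h4 : ∑ x, ν x ^ 2 = ((P ×ˢ P).filter (fun q => φ q.1 = φ q.2)).card := by
    rw [Finset.card_filter, Finset.sum_product]
    have : ∀ q ∈ P, ∑ y ∈ P, (if φ q = φ y then 1 else 0) = (P.filter (fun y => φ y = φ q)).card := by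
      intro q _
      rw [Finset.card_filter]
      simp only [eq_comm]
    rw [Finset.sum_congr rfl this]
    push_cast
    rw [← Finset.sum_fiberwise P φ]
    refine Finset.sum_congr rfl fun x _ => ?_
    rw [Finset.sum_congr rfl (g := fun _ => ν x)
      (fun q hq => by rw [(Finset.mem_filter.1 hq).2])]
    simp [ν, sq]
  have h0 : 0 ≤ ∑ q ∈ P, h (φ q) := Finset.sum_nonneg fun q _ => hh _
  calc (∑ q ∈ P, h (φ q)) ^ (2 * (n + 1)) = ((∑ q ∈ P, h (φ q)) ^ (n + 1)) ^ 2 := by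
        rw [← pow_mul]; congr 1; ring
    _ ≤ ((P.card : ℝ) ^ n * ∑ q ∈ P, h (φ q) ^ (n + 1)) ^ 2 := by gcongr
    _ = (P.card : ℝ) ^ (2 * (n + 1) - 2) * (∑ x, ν x * h x ^ (n + 1)) ^ 2 := by
        rw [h2, mul_pow, ← pow_mul]; congr 2; omega
    _ ≤ (P.card : ℝ) ^ (2 * (n + 1) - 2) * ((∑ x, ν x ^ 2) * ∑ x, (h x ^ (n + 1)) ^ 2) := by
        gcongr
    _ = _ := by
        rw [h4, ← mul_assoc]
        congr 1
        refine Finset.sum_congr rfl fun x _ => ?_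
        rw [← pow_mul]; congr 1; ring

/-- Shifting the summation interval by `t` changes at most `2 * t` terms. -/
lemma norm_sum_shift (F : ℕ → ℂ) (hF : ∀ n, ‖F n‖ ≤ 1) (N t : ℕ) :
    ‖∑ n ∈ Finset.Icc 1 N, F n - ∑ n ∈ Finset.Icc 1 N, F (n + t)‖ ≤ 2 * t := by
  induction t with
  | zero => simp
  | succ t ih =>
    have h1 : ∑ n ∈ Finset.Icc 1 N, F (n + t) - ∑ n ∈ Finset.Icc 1 N, F (n + (t + 1))
        = F (1 + t) - F (N + 1 + t) := by
      clear ih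
      induction N with
      | zero => simp
      | succ N ih =>
        rw [Finset.sum_Icc_succ_top (by omega), Finset.sum_Icc_succ_top (by omega)]
        have e : N + 1 + (t + 1) = N + 1 + 1 + t := by ring
        rw [e]
        linear_combination ih
    have h2 : ‖F (1 + t) - F (N + 1 + t)‖ ≤ 2 := (norm_sub_le _ _).trans (by
      linarith [hF (1 + t), hF (N + 1 + t)])
    calc _ = ‖(∑ n ∈ Finset.Icc 1 N, F n - ∑ n ∈ Finset.Icc 1 N, F (n + t))
          + (∑ n ∈ Finset.Icc 1 N, F (n + t) - ∑ n ∈ Finset.Icc 1 N, F (n + (t + 1)))‖ := by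
          congr 1; ring
      _ ≤ 2 * t + 2 := (norm_add_le _ _).trans (add_le_add ih (h1 ▸ h2))
      _ = _ := by push_cast; ring

lemma mulChar_norm_le_one {p : ℕ} [Fact p.Prime] (χ : MulChar (ZMod p) ℂ) (y : ZMod p) :
    ‖χ y‖ ≤ 1 := by
  by_cases hy : y = 0
  · rw [hy, MulChar.map_zero]; simp
  · have h0 : 0 < p - 1 := Nat.sub_pos_of_lt (Fact.out : p.Prime).one_lt
    refine (Complex.norm_eq_one_of_pow_eq_one (n := p - 1) ?_ h0.ne').le
    rw [← map_pow, ZMod.pow_card_sub_one_eq_one hy, MulChar.map_one]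

/-- Burgess's inequality in explicit form: the sum is averaged over the shifts `n ↦ n + a * b` with
`a ≤ A`, `b ≤ B`. Up to a factor `χ a` these depend only on `n / a` and `b`, and the resulting
average `W` is bounded through `holder_fiber`, `card_quad` and `moment`. -/
lemma burgess_raw {p : ℕ} [Fact p.Prime] (hp100 : 100 ≤ p) (χ : MulChar (ZMod p) ℂ) {d r : ℕ}
    (hχ : χ ≠ 1) (hd : orderOf χ = d) (hdp : d ∣ p - 1) (hr : 1 ≤ r)
    {A B N : ℕ} (hA : 1 ≤ A) (hB : 1 ≤ B) (hN : 1 ≤ N) (hAN : A * N < p) (hBp : B < p)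
    (hBr : √(p : ℝ) ≤ (B : ℝ) ^ r) :
    ∃ W : ℝ, 0 ≤ W ∧ ‖∑ n ∈ Finset.Icc 1 N, χ (n : ZMod p)‖ ≤ W * N + 2 * A * B ∧
      W ^ (2 * r) ≤ ((r : ℝ) ^ (2 * r) + d * (8 * (r * d : ℕ) + 10)) *
        ((1 + Real.log A) ^ 2 * √p / (A * N)) := by
  classical
  have hAp : A < p := lt_of_le_of_lt (Nat.le_mul_of_pos_right _ hN) hAN
  have hNp : N < p := lt_of_le_of_lt (Nat.le_mul_of_pos_left _ hA) hAN
  have hcast : ∀ n, 1 ≤ n → n < p → ((n : ℕ) : ZMod p) ≠ 0 := by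
    intro n h1 h2 h
    rw [ZMod.natCast_eq_zero_iff] at h
    exact absurd (Nat.le_of_dvd h1 h) (by omega)
  have hinj : ∀ m n : ℕ, m < p → n < p → ((m : ℕ) : ZMod p) = n → m = n := by
    intro m n hm hn h
    rw [ZMod.natCast_eq_natCast_iff'] at h
    rwa [Nat.mod_eq_of_lt hm, Nat.mod_eq_of_lt hn] at h
  set s : Finset (ZMod p) := (Finset.Icc 1 B).image (fun b : ℕ => (b : ZMod p)) with hs
  have hinjs : Set.InjOn (fun b : ℕ => (b : ZMod p)) (Finset.Icc 1 B : Finset ℕ) := by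
    intro m hm n hn h
    simp only [Finset.coe_Icc, Set.mem_Icc] at hm hn
    exact hinj m n (by omega) (by omega) h
  have hscard : s.card = B := by
    rw [hs, Finset.card_image_of_injOn hinjs]; simp
  set h : ZMod p → ℝ := fun x => ‖∑ b ∈ s, χ (x + b)‖ with hh
  set P := Finset.Icc 1 A ×ˢ Finset.Icc 1 N with hP
  have hPcard : (P.card : ℝ) = A * N := by rw [hP, Finset.card_product]; simp
  set φ : ℕ × ℕ → ZMod p := fun q => (q.2 : ZMod p) * (q.1 : ZMod p)⁻¹ with hφ
  set W₀ := ∑ q ∈ P, h (φ q) with hW₀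
  have hW0 : 0 ≤ W₀ := Finset.sum_nonneg fun q _ => norm_nonneg _
  have hAR : (0 : ℝ) < A := by exact_mod_cast hA
  have hBR : (0 : ℝ) < B := by exact_mod_cast hB
  have hNR : (0 : ℝ) < N := by exact_mod_cast hN
  refine ⟨W₀ / (A * B * N), by positivity, ?_, ?_⟩
  · set V := ∑ n ∈ Finset.Icc 1 N, χ (n : ZMod p) with hV
    have key : ‖((A * B : ℕ) : ℂ) * V‖ ≤ W₀ + A * B * (2 * A * B) := by
      have h1 : ((A * B : ℕ) : ℂ) * V = ∑ a ∈ Finset.Icc 1 A, ∑ b ∈ Finset.Icc 1 B,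
          (V - ∑ n ∈ Finset.Icc 1 N, χ ((n + a * b : ℕ) : ZMod p))
          + ∑ a ∈ Finset.Icc 1 A, ∑ b ∈ Finset.Icc 1 B,
            ∑ n ∈ Finset.Icc 1 N, χ ((n + a * b : ℕ) : ZMod p) := by
        rw [← Finset.sum_add_distrib]
        simp_rw [← Finset.sum_add_distrib, sub_add_cancel]
        simp; ring
      have h2 : ‖∑ a ∈ Finset.Icc 1 A, ∑ b ∈ Finset.Icc 1 B,
          (V - ∑ n ∈ Finset.Icc 1 N, χ ((n + a * b : ℕ) : ZMod p))‖ ≤ A * B * (2 * A * B) := by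
        have : ∀ a ∈ Finset.Icc 1 A, ‖∑ b ∈ Finset.Icc 1 B,
            (V - ∑ n ∈ Finset.Icc 1 N, χ ((n + a * b : ℕ) : ZMod p))‖ ≤ B * (2 * A * B) := by
          intro a ha
          have : ∀ b ∈ Finset.Icc 1 B,
            ‖V - ∑ n ∈ Finset.Icc 1 N, χ ((n + a * b : ℕ) : ZMod p)‖ ≤ 2 * A * B := by
            intro b hb
            rw [Finset.mem_Icc] at ha hb
            have e := norm_sum_shift (fun n => χ (n : ZMod p)) (fun n => mulChar_norm_le_one χ _)
              N (a * b)
            refine e.trans ?_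
            push_cast
            have : (a : ℝ) ≤ A := by exact_mod_cast ha.2
            have : (b : ℝ) ≤ B := by exact_mod_cast hb.2
            rw [mul_assoc 2 (A : ℝ)]
            gcongr
          refine (norm_sum_le_of_le _ this).trans ?_
          simp
        refine (norm_sum_le_of_le _ this).trans ?_
        simp [mul_assoc]
      have h3 : ‖∑ a ∈ Finset.Icc 1 A, ∑ b ∈ Finset.Icc 1 B,
            ∑ n ∈ Finset.Icc 1 N, χ ((n + a * b : ℕ) : ZMod p)‖ ≤ W₀ := by
        rw [hW₀, hP, Finset.sum_product]
        refine norm_sum_le_of_le _ fun a ha => ?_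
        rw [Finset.sum_comm]
        refine norm_sum_le_of_le _ fun n hn => ?_
        rw [Finset.mem_Icc] at ha
        have ha0 : (a : ZMod p) ≠ 0 := hcast a ha.1 (by omega)
        have : ∑ b ∈ Finset.Icc 1 B, χ ((n + a * b : ℕ) : ZMod p)
            = χ a * ∑ b ∈ s, χ (φ (a, n) + b) := by
          rw [hs, Finset.sum_image hinjs, Finset.mul_sum]
          refine Finset.sum_congr rfl fun b _ => ?_
          rw [← map_mul]
          congr 1
          simp only [hφ]
          push_cast
          field_simp
        rw [this, norm_mul]
        exact mul_le_of_le_one_left (norm_nonneg _) (mulChar_norm_le_one χ _)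
      rw [h1]
      refine (norm_add_le _ _).trans ?_
      linarith
    rw [norm_mul] at key
    simp only [Complex.norm_natCast] at key
    push_cast at key
    have : W₀ / (A * B * N) * N + 2 * A * B = (W₀ + A * B * (2 * A * B)) / (A * B) := by
      field_simp
    rw [this, le_div_iff₀ (by positivity)]
    linarith
  · have h1 := holder_fiber P φ h (fun x => norm_nonneg _) r hr
    have h2 := moment hp100 χ hχ hd hdp hr s
    rw [hscard] at h2
    have h3 : (((P ×ˢ P).filter (fun q => φ q.1 = φ q.2)).card : ℝ)
        ≤ A * N * (1 + Real.log A) ^ 2 := by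
      refine le_trans (Nat.cast_le.2 (Finset.card_le_card ?_)) (card_quad A N)
      intro q hq
      rw [Finset.mem_filter] at hq ⊢
      refine ⟨hq.1, ?_⟩
      obtain ⟨hq1, hq2⟩ := hq
      simp only [hP, Finset.mem_product, Finset.mem_Icc] at hq1
      have e1 : (q.1.1 : ZMod p) ≠ 0 := hcast _ hq1.1.1.1 (by omega)
      have e2 : (q.2.1 : ZMod p) ≠ 0 := hcast _ hq1.2.1.1 (by omega)
      simp only [hφ] at hq2
      field_simp at hq2
      apply hinj
      · calc q.1.2 * q.2.1 ≤ N * A := Nat.mul_le_mul hq1.1.2.2 hq1.2.1.2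
          _ < p := by rwa [mul_comm]
      · calc q.2.2 * q.1.1 ≤ N * A := Nat.mul_le_mul hq1.2.2.2 hq1.1.1.2
          _ < p := by rwa [mul_comm]
      · push_cast
        linear_combination hq2
    have h4 : (B : ℝ) ^ r * r ^ (2 * r) * p ≤ (B : ℝ) ^ (2 * r) * (r ^ (2 * r) * √p) := by
      have : (p : ℝ) ≤ B ^ r * √p := by
        nth_rewrite 1 [← Real.mul_self_sqrt (Nat.cast_nonneg (α := ℝ) p)]
        gcongr
      calc _ ≤ (B : ℝ) ^ r * r ^ (2 * r) * (B ^ r * √p) := by gcongr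
        _ = _ := by ring
    have h5 : W₀ ^ (2 * r) ≤ (A * N : ℝ) ^ (2 * r - 2) * (A * N * (1 + Real.log A) ^ 2) *
        ((B : ℝ) ^ (2 * r) * ((r ^ (2 * r) + d * (8 * (r * d : ℕ) + 10)) * √p)) := by
      refine h1.trans ?_
      rw [hPcard]
      have : ∑ x, h x ^ (2 * r) ≤
          (B : ℝ) ^ (2 * r) * ((r ^ (2 * r) + d * (8 * (r * d : ℕ) + 10)) * √p) := by
        refine h2.trans ?_
        linarith
      gcongr
    rw [div_pow, div_le_iff₀ (by positivity)]
    refine h5.trans (le_of_eq ?_)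
    obtain ⟨n, rfl⟩ : ∃ n, r = n + 1 := ⟨r - 1, by omega⟩
    have e : 2 * (n + 1) - 2 = 2 * n := by omega
    rw [e]
    have e2 : 2 * (n + 1) = 2 * n + 2 := by ring
    rw [e2]
    field_simp
    ring

open Filter in
/-- Burgess's theorem for `d` bounded: character sums of length `p ^ (1 / 4 + δ)` are small. -/
lemma burgess (d : ℕ) {δ η : ℝ} (hδ : 0 < δ) (hδ8 : δ ≤ 1 / 8) (hη : 0 < η) :
    ∃ p₀ : ℕ, ∀ p : ℕ, p₀ ≤ p → ∀ [Fact p.Prime], ∀ χ : MulChar (ZMod p) ℂ, χ ≠ 1 →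
      orderOf χ ≤ d → orderOf χ ∣ p - 1 →
      ‖∑ n ∈ Finset.Icc 1 ⌊(p : ℝ) ^ (1 / 4 + δ)⌋₊, χ (n : ZMod p)‖ ≤
        η * (p : ℝ) ^ (1 / 4 + δ) := by
  -- `burgess_raw` is applied with `A ≈ p ^ (1 / 4)` and `B ≈ p ^ (1 / (2 * r))`. Since
  -- `1 / (2 * r) ≤ δ / 4`, the shift error `2 * A * B` is negligible against `X = p ^ (1 / 4 + δ)`.
  obtain ⟨r, hr⟩ := exists_nat_gt (2 / δ)
  have hr0 : (0 : ℝ) < r := lt_trans (by positivity) hr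
  have hr1 : 1 ≤ r := by exact_mod_cast hr0
  have hrδ : 1 / (2 * r : ℝ) ≤ δ / 4 := by
    rw [div_lt_iff₀ hδ] at hr
    rw [div_le_div_iff₀ (by positivity) (by norm_num)]
    nlinarith
  set c : ℝ := (r : ℝ) ^ (2 * r) + d * (8 * (r * d : ℕ) + 10) with hc
  have hc0 : 0 < c := by positivity
  have t1 : Tendsto (fun p : ℕ => 4 * ((p : ℝ) ^ (-(3 * δ / 4)))) atTop (nhds (4 * 0)) :=
    ((tendsto_rpow_neg_atTop (by positivity)).comp tendsto_natCast_atTop_atTop).const_mul _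
  have t2 : Tendsto (fun x : ℝ => 4 * c * ((1 + Real.log x) * x ^ (-(δ / 2))) ^ 2) atTop
      (nhds (4 * c * (0 + 0) ^ 2)) := by
    refine Tendsto.const_mul _ (Tendsto.pow ?_ 2)
    have e1 := tendsto_rpow_neg_atTop (y := δ / 2) (by positivity)
    have e2 : Tendsto (fun x : ℝ => Real.log x / x ^ (δ / 2)) atTop (nhds 0) :=
      (isLittleO_log_rpow_atTop (r := δ / 2) (by positivity)).tendsto_div_nhds_zero
    refine (e1.add e2).congr' ?_
    filter_upwards [eventually_gt_atTop 0] with x hx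
    rw [Real.rpow_neg hx.le]
    field_simp
  have t2' := t2.comp (tendsto_natCast_atTop_atTop (R := ℝ))
  have ev1 := (t1.eventually (gt_mem_nhds (show 4 * 0 < η / 2 by simp; positivity)))
  have ev2 := (t2'.eventually (gt_mem_nhds (show 4 * c * (0 + 0) ^ 2 < (η / 2) ^ (2 * r) by
    simp; positivity)))
  obtain ⟨p₀, hp₀⟩ := eventually_atTop.1 (ev1.and (ev2.and (eventually_ge_atTop 100)))
  refine ⟨p₀, fun p hp _ χ hχ hχd hχp => ?_⟩
  obtain ⟨h1, h2, h100⟩ := hp₀ p hp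
  have hpR : (100 : ℝ) ≤ p := by exact_mod_cast h100
  have hp0 : (0 : ℝ) < p := by linarith
  have hp1 : (1 : ℝ) ≤ p := by linarith
  have floor_half : ∀ x : ℝ, 1 ≤ x → x / 2 ≤ ⌊x⌋₊ := by
    intro x hx
    have a1 := Nat.lt_floor_add_one x
    have a2 : (1 : ℝ) ≤ ⌊x⌋₊ := by exact_mod_cast (Nat.one_le_floor_iff x).2 hx
    linarith
  have one_le : ∀ e : ℝ, 0 ≤ e → 1 ≤ (p : ℝ) ^ e := fun e he => Real.one_le_rpow hp1 he
  set X := (p : ℝ) ^ (1 / 4 + δ) with hX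
  set Y := (p : ℝ) ^ (1 / 4 : ℝ) with hY
  set Z := (p : ℝ) ^ (1 / (2 * r) : ℝ) with hZ
  have hX1 : 1 ≤ X := one_le _ (by positivity)
  have hY1 : 1 ≤ Y := one_le _ (by positivity)
  have hZ1 : 1 ≤ Z := one_le _ (by positivity)
  have hA2 := floor_half Y hY1
  have hN2 := floor_half X hX1
  have hAle : (⌊Y⌋₊ : ℝ) ≤ Y := Nat.floor_le (by linarith)
  have hNle : (⌊X⌋₊ : ℝ) ≤ X := Nat.floor_le (by linarith)
  have hBle : (⌈Z⌉₊ : ℝ) ≤ 2 * Z := by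
    have := Nat.ceil_lt_add_one (a := Z) (by linarith)
    linarith
  have hZle : Z ≤ (p : ℝ) ^ (δ / 4) := Real.rpow_le_rpow_of_exponent_le hp1 hrδ
  have hXY : Y * X = √p * (p : ℝ) ^ δ := by
    rw [hX, hY, Real.sqrt_eq_rpow, ← Real.rpow_add hp0, ← Real.rpow_add hp0]
    congr 1; ring
  have hXY2 : Y * X < p := by
    rw [hX, hY, ← Real.rpow_add hp0]
    calc _ < (p : ℝ) ^ (1 : ℝ) := Real.rpow_lt_rpow_of_exponent_lt (by linarith) (by linarith)
      _ = p := Real.rpow_one _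
  have hAN : ⌊Y⌋₊ * ⌊X⌋₊ < p := by
    have : (⌊Y⌋₊ * ⌊X⌋₊ : ℝ) < p := lt_of_le_of_lt (by gcongr) hXY2
    exact_mod_cast this
  have hB1 : 1 ≤ ⌈Z⌉₊ := Nat.one_le_ceil_iff.2 (by linarith)
  have hBp : ⌈Z⌉₊ < p := by
    have h3 : Z ≤ √p := by
      rw [Real.sqrt_eq_rpow]
      refine hZle.trans (Real.rpow_le_rpow_of_exponent_le hp1 (by linarith))
    have h4 : 10 ≤ √(p : ℝ) := Real.le_sqrt_of_sq_le (by linarith)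
    have h5 := Real.mul_self_sqrt hp0.le
    have : (⌈Z⌉₊ : ℝ) < p := by nlinarith
    exact_mod_cast this
  have hBr : √(p : ℝ) ≤ (⌈Z⌉₊ : ℝ) ^ r := by
    have : √(p : ℝ) = Z ^ r := by
      rw [hZ, ← Real.rpow_natCast, ← Real.rpow_mul hp0.le, Real.sqrt_eq_rpow]
      congr 1
      field_simp
    rw [this]
    have := Nat.le_ceil Z
    gcongr
  obtain ⟨W, hW0, hW, hWr⟩ := burgess_raw h100 χ hχ rfl hχp hr1
    ((Nat.one_le_floor_iff Y).2 hY1) hB1 ((Nat.one_le_floor_iff X).2 hX1) hAN hBp hBr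
  have hA0 : (0 : ℝ) < ⌊Y⌋₊ := by linarith
  have hN0 : (0 : ℝ) < ⌊X⌋₊ := by linarith
  have hlogp : 0 ≤ Real.log p := Real.log_nonneg hp1
  have hlog : Real.log ⌊Y⌋₊ ≤ Real.log p := by
    refine Real.log_le_log hA0 (hAle.trans ?_)
    calc Y ≤ (p : ℝ) ^ (1 : ℝ) := Real.rpow_le_rpow_of_exponent_le hp1 (by norm_num)
      _ = p := Real.rpow_one _
  have hlog0 : 0 ≤ Real.log ⌊Y⌋₊ := Real.log_natCast_nonneg _
  have hfrac : √(p : ℝ) / (⌊Y⌋₊ * ⌊X⌋₊) ≤ 4 * ((p : ℝ) ^ (-(δ / 2))) ^ 2 := by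
    have e : ((p : ℝ) ^ (-(δ / 2))) ^ 2 = ((p : ℝ) ^ δ)⁻¹ := by
      rw [← Real.rpow_natCast, ← Real.rpow_mul hp0.le, ← Real.rpow_neg hp0.le]
      congr 1; push_cast; ring
    have e2 : √(p : ℝ) * (p : ℝ) ^ δ ≤ 4 * (⌊Y⌋₊ * ⌊X⌋₊) := by
      rw [← hXY]
      calc Y * X ≤ (2 * ⌊Y⌋₊) * (2 * ⌊X⌋₊) := by gcongr <;> linarith
        _ = _ := by ring
    have hpd : 0 < (p : ℝ) ^ δ := by positivity
    rw [e, div_le_iff₀ (by positivity), ← div_eq_mul_inv, div_mul_eq_mul_div,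
      le_div_iff₀ hpd]
    exact e2
  have hWs : W ^ (2 * r) ≤ (η / 2) ^ (2 * r) := by
    refine hWr.trans (le_trans ?_ h2.le)
    have hcc : ((r : ℝ) ^ (2 * r) + (orderOf χ : ℕ) * (8 * (r * orderOf χ : ℕ) + 10)) ≤ c := by
      rw [hc]; gcongr
    calc _ ≤ c * ((1 + Real.log p) ^ 2 * (4 * ((p : ℝ) ^ (-(δ / 2))) ^ 2)) := by
          rw [mul_div_assoc]
          gcongr
      _ = _ := by simp only [Function.comp]; ring
  have hWη : W ≤ η / 2 := (pow_le_pow_iff_left₀ hW0 (by positivity) (by omega)).1 hWs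
  refine hW.trans ?_
  have h3 : 2 * (⌊Y⌋₊ : ℝ) * ⌈Z⌉₊ ≤ η / 2 * X := by
    calc 2 * (⌊Y⌋₊ : ℝ) * ⌈Z⌉₊ ≤ 2 * Y * (2 * (p : ℝ) ^ (δ / 4)) := by
          gcongr; linarith
      _ = 4 * (p : ℝ) ^ (-(3 * δ / 4)) * X := by
          have : Y * (p : ℝ) ^ (δ / 4) = (p : ℝ) ^ (-(3 * δ / 4)) * X := by
            rw [hX, hY, ← Real.rpow_add hp0, ← Real.rpow_add hp0]
            congr 1; ring
          linear_combination 4 * this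
      _ ≤ _ := by gcongr
  have h4 : W * ⌊X⌋₊ ≤ η / 2 * X := by gcongr
  linarith

/-! ### Mertens' theorem -/

lemma log_factorial_eq (N : ℕ) :
    Real.log (N.factorial) = ∑ q ∈ Nat.primesLE N, (padicValNat q N.factorial) * Real.log q := by
  rw [Real.log_nat_eq_sum_factorization, Finsupp.sum_of_support_subset (s := Nat.primesLE N)]
  · refine Finset.sum_congr rfl fun q hq => ?_
    rw [Nat.factorization_def _ (Nat.prime_of_mem_primesLE hq)]
  · intro q hq
    rw [Nat.support_factorization, Nat.mem_primeFactors] at hq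
    exact Nat.mem_primesLE.2 ⟨(hq.1.dvd_factorial).1 hq.2.1, hq.1⟩
  · simp

/-- Mertens' first theorem: both inequalities compare `∑ log q / q` with `log N! / N`, through
Legendre's formula. The upper one also uses Chebyshev's bound `θ(N) ≤ N log 4`. -/
lemma mertens_first : ∃ C : ℝ, 0 ≤ C ∧ ∀ N : ℕ, 1 ≤ N →
    |∑ q ∈ Nat.primesLE N, Real.log q / q - Real.log N| ≤ C := by
  have hsum : Summable (fun n : ℕ => 4 * (n : ℝ) ^ (-(3 / 2) : ℝ)) :=
    (Real.summable_nat_rpow.2 (by norm_num)).mul_left 4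
  set K := ∑' n : ℕ, 4 * (n : ℝ) ^ (-(3 / 2) : ℝ) with hK
  have hK0 : 0 ≤ K := tsum_nonneg fun n => by positivity
  have hlog4 : 0 ≤ Real.log 4 := Real.log_nonneg (by norm_num)
  refine ⟨1 + K + Real.log 4, by positivity, fun N hN => ?_⟩
  have hNR : (0 : ℝ) < N := by exact_mod_cast hN
  have low : Real.log N.factorial ≤ N * ∑ q ∈ Nat.primesLE N, Real.log q / q + N * K := by
    have h1 : ∀ q ∈ Nat.primesLE N, (padicValNat q N.factorial) * Real.log q ≤
        N * (Real.log q / q) + N * (4 * (q : ℝ) ^ (-(3 / 2) : ℝ)) := by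
      intro q hq
      have hqp := Nat.prime_of_mem_primesLE hq
      have : Fact q.Prime := ⟨hqp⟩
      have hq2 : (2 : ℝ) ≤ q := by exact_mod_cast hqp.two_le
      have hq0 : (0 : ℝ) < q := by linarith
      have hlogq : 0 ≤ Real.log q := Real.log_nonneg (by linarith)
      have e1 : ((q : ℝ) - 1) * padicValNat q N.factorial ≤ N := by
        have := sub_one_mul_padicValNat_factorial (p := q) N
        have h2 : (q - 1) * padicValNat q N.factorial ≤ N := by omega
        have h3 : (((q - 1 : ℕ) : ℝ)) * padicValNat q N.factorial ≤ N := by exact_mod_cast h2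
        rwa [Nat.cast_sub hqp.one_le, Nat.cast_one] at h3
      have e2 : (padicValNat q N.factorial : ℝ) ≤ N * (1 / q + 2 / q ^ 2) := by
        have : (padicValNat q N.factorial : ℝ) ≤ N / (q - 1) := by
          rw [le_div_iff₀ (by linarith)]; linarith
        refine this.trans ?_
        rw [div_eq_mul_one_div]
        gcongr
        rw [div_add_div _ _ hq0.ne' (by positivity), div_le_div_iff₀ (by linarith) (by positivity)]
        nlinarith
      have e3 : Real.log q ≤ 2 * (q : ℝ) ^ (1 / 2 : ℝ) := by
        have := Real.log_le_rpow_div hq0.le (ε := 1 / 2) (by norm_num)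
        linarith
      have e4 : 2 * (q : ℝ) ^ (1 / 2 : ℝ) * (2 / q ^ 2) = 4 * (q : ℝ) ^ (-(3 / 2) : ℝ) := by
        have : (q : ℝ) ^ (-(3 / 2) : ℝ) = (q : ℝ) ^ (1 / 2 : ℝ) / q ^ 2 := by
          rw [← Real.rpow_natCast, ← Real.rpow_sub hq0]
          norm_num
        rw [this]; ring
      calc (padicValNat q N.factorial) * Real.log q
          ≤ N * (1 / q + 2 / q ^ 2) * Real.log q := by gcongr
        _ = N * (Real.log q / q) + N * (Real.log q * (2 / q ^ 2)) := by ring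
        _ ≤ N * (Real.log q / q) + N * (2 * (q : ℝ) ^ (1 / 2 : ℝ) * (2 / q ^ 2)) := by gcongr
        _ = _ := by rw [e4]
    rw [log_factorial_eq]
    refine (Finset.sum_le_sum h1).trans ?_
    rw [Finset.sum_add_distrib, ← Finset.mul_sum, ← Finset.mul_sum]
    gcongr
    exact hsum.sum_le_tsum _ fun i _ => by positivity
  have up : N * ∑ q ∈ Nat.primesLE N, Real.log q / q ≤ Real.log N.factorial + Real.log 4 * N := by
    have h1 : ∀ q ∈ Nat.primesLE N, N * (Real.log q / q) ≤
        (padicValNat q N.factorial) * Real.log q + Real.log q := by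
      intro q hq
      have hqp := Nat.prime_of_mem_primesLE hq
      have : Fact q.Prime := ⟨hqp⟩
      have hq2 : (2 : ℝ) ≤ q := by exact_mod_cast hqp.two_le
      have hq0 : (0 : ℝ) < q := by linarith
      have hlogq : 0 ≤ Real.log q := Real.log_nonneg (by linarith)
      have e1 : N / q ≤ padicValNat q N.factorial := by
        rw [padicValNat_factorial (b := Nat.log q N + 2) (by omega)]
        have := Finset.single_le_sum (f := fun i => N / q ^ i) (s := Finset.Ico 1 (Nat.log q N + 2))
          (a := 1) (fun _ _ => Nat.zero_le _) (by simp)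
        simpa using this
      have e2 : (N : ℝ) / q ≤ padicValNat q N.factorial + 1 := by
        have h2 := (Nat.lt_succ_floor ((N : ℝ) / q)).le
        rw [Nat.floor_div_eq_div] at h2
        have : ((N / q : ℕ) : ℝ) ≤ padicValNat q N.factorial := by exact_mod_cast e1
        push_cast at h2
        linarith
      calc N * (Real.log q / q) = (N / q) * Real.log q := by ring
        _ ≤ (padicValNat q N.factorial + 1) * Real.log q := by gcongr
        _ = _ := by ring
    have h2 := Chebyshev.theta_le_log4_mul_x (x := N) hNR.le
    rw [Chebyshev.theta_eq_sum_primesLE_log] at h2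
    rw [log_factorial_eq, Finset.mul_sum]
    refine (Finset.sum_le_sum h1).trans ?_
    rw [Finset.sum_add_distrib]
    gcongr
  have f1 : Real.log N.factorial ≤ N * Real.log N := by
    rw [← Real.log_pow]
    refine Real.log_le_log (by positivity) ?_
    exact_mod_cast Nat.factorial_le_pow N
  have f2 := Stirling.le_log_factorial_stirling (n := N) (by omega)
  have f3 : 0 ≤ Real.log N := Real.log_natCast_nonneg _
  have f4 : 0 ≤ Real.log (2 * Real.pi) := Real.log_nonneg (by linarith [Real.pi_gt_three])
  rw [abs_le]
  constructor
  · have : N * (Real.log N) ≤ N * (∑ q ∈ Nat.primesLE N, Real.log q / q + K + 1) := by linarith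
    have := le_of_mul_le_mul_left this hNR
    linarith
  · have : N * ∑ q ∈ Nat.primesLE N, Real.log q / q ≤ N * (Real.log N + Real.log 4) := by linarith
    have := le_of_mul_le_mul_left this hNR
    linarith

/-- The primes in the interval `(y, z]`. -/
noncomputable def primesIoc (y z : ℝ) : Finset ℕ :=
  (Nat.primesLE ⌊z⌋₊).filter (fun q : ℕ => y < q)

lemma mem_primesIoc {y z : ℝ} {q : ℕ} (hz : 0 ≤ z) :
    q ∈ primesIoc y z ↔ q.Prime ∧ y < q ∧ (q : ℝ) ≤ z := by
  rw [primesIoc, Finset.mem_filter, Nat.mem_primesLE, Nat.le_floor_iff hz]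
  tauto

/-- Mertens' first theorem over the primes in `(y, z]`, with real endpoints. -/
lemma mertens_log : ∃ C : ℝ, 0 ≤ C ∧ ∀ y z : ℝ, 1 ≤ y → y ≤ z →
    |∑ q ∈ primesIoc y z, Real.log q / q - (Real.log z - Real.log y)| ≤ C := by
  obtain ⟨C, hC0, hC⟩ := mertens_first
  refine ⟨2 * (C + Real.log 2), by positivity, fun y z hy hyz => ?_⟩
  have hfl : ∀ x : ℝ, 1 ≤ x →
      |∑ q ∈ Nat.primesLE ⌊x⌋₊, Real.log q / q - Real.log x| ≤ C + Real.log 2 := by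
    intro x hx
    have h1 : 1 ≤ ⌊x⌋₊ := (Nat.one_le_floor_iff x).2 hx
    have h1R : (1 : ℝ) ≤ ⌊x⌋₊ := by exact_mod_cast h1
    have a1 := Nat.lt_floor_add_one x
    have h2 : Real.log ⌊x⌋₊ ≤ Real.log x :=
      Real.log_le_log (by linarith) (Nat.floor_le (by linarith))
    have h3 : Real.log x ≤ Real.log 2 + Real.log ⌊x⌋₊ := by
      rw [← Real.log_mul (by norm_num) (by linarith)]
      exact Real.log_le_log (by linarith) (by linarith)
    have h4 := abs_le.1 (hC _ h1)
    rw [abs_le]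
    have : 0 ≤ Real.log 2 := Real.log_nonneg (by norm_num)
    constructor <;> linarith
  have hsplit : ∑ q ∈ primesIoc y z, Real.log q / q =
      ∑ q ∈ Nat.primesLE ⌊z⌋₊, Real.log q / q - ∑ q ∈ Nat.primesLE ⌊y⌋₊, Real.log q / q := by
    rw [eq_sub_iff_add_eq, primesIoc,
      ← Finset.sum_filter_add_sum_filter_not (Nat.primesLE ⌊z⌋₊) (fun q : ℕ => y < q)]
    congr 1
    refine Finset.sum_congr ?_ fun _ _ => rfl
    ext q
    rw [Finset.mem_filter, Nat.mem_primesLE, Nat.mem_primesLE, Nat.le_floor_iff (by linarith),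
      Nat.le_floor_iff (by linarith), not_lt]
    constructor
    · exact fun h => ⟨⟨h.1.trans hyz, h.2⟩, h.1⟩
    · exact fun h => ⟨h.2, h.1.2⟩
  have a := abs_le.1 (hfl y hy)
  have b := abs_le.1 (hfl z (hy.trans hyz))
  rw [hsplit, abs_le]
  constructor <;> linarith

/-- Bounds for the sum of reciprocals of primes between `x ^ (1 / u)` and `x ^ (1 / v)`.
They are sharp to first order when `u - v` is small. -/
lemma sum_recip_primes {u v η : ℝ} (hv : 1 ≤ v) (huv : v < u) (hη : 0 < η) :
    ∃ x₀ : ℝ, 1 ≤ x₀ ∧ ∀ x : ℝ, x₀ ≤ x →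
      ∑ q ∈ primesIoc (x ^ (1 / u)) (x ^ (1 / v)), (1 : ℝ) / q ≤ (u - v) / v + η ∧
      (u - v) / u - η ≤ ∑ q ∈ primesIoc (x ^ (1 / u)) (x ^ (1 / v)), (1 : ℝ) / q := by
  obtain ⟨C, hC0, hC⟩ := mertens_log
  have hu : 0 < u := by linarith
  refine ⟨Real.exp (C * u / η + 1), Real.one_le_exp (by positivity), fun x hx => ?_⟩
  have hx0 : 0 < x := lt_of_lt_of_le (Real.exp_pos _) hx
  have hx1 : 1 ≤ x := le_trans (Real.one_le_exp (by positivity)) hx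
  have hlogx : C * u / η + 1 ≤ Real.log x := (Real.le_log_iff_exp_le hx0).2 hx
  have hL0 : 0 < Real.log x := lt_of_lt_of_le (by positivity) hlogx
  have hCL : C * u ≤ η * Real.log x := by
    have : C * u / η ≤ Real.log x := by linarith
    rw [div_le_iff₀ hη] at this
    linarith
  set y := x ^ (1 / u) with hy
  set z := x ^ (1 / v) with hz
  have hy1 : 1 ≤ y := Real.one_le_rpow hx1 (by positivity)
  have hyz : y ≤ z := Real.rpow_le_rpow_of_exponent_le hx1 (by gcongr)
  have hly : Real.log y = Real.log x / u := by rw [hy, Real.log_rpow hx0]; ring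
  have hlz : Real.log z = Real.log x / v := by rw [hz, Real.log_rpow hx0]; ring
  have h := abs_le.1 (hC y z hy1 hyz)
  rw [hly, hlz] at h
  have hmem : ∀ q ∈ primesIoc y z, (0 : ℝ) < q ∧ Real.log x / u ≤ Real.log q ∧
      Real.log q ≤ Real.log x / v := by
    intro q hq
    obtain ⟨h1, h2, h3⟩ := (mem_primesIoc (by linarith)).1 hq
    have hq0 : (0 : ℝ) < q := by exact_mod_cast h1.pos
    rw [← hly, ← hlz]
    exact ⟨hq0, Real.log_le_log (by linarith) h2.le, Real.log_le_log hq0 h3⟩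
  have up : (Real.log x / u) * ∑ q ∈ primesIoc y z, (1 : ℝ) / q ≤
      ∑ q ∈ primesIoc y z, Real.log q / q := by
    rw [Finset.mul_sum]
    refine Finset.sum_le_sum fun q hq => ?_
    obtain ⟨h1, h2, h3⟩ := hmem q hq
    rw [mul_one_div]
    gcongr
  have low : ∑ q ∈ primesIoc y z, Real.log q / q ≤
      (Real.log x / v) * ∑ q ∈ primesIoc y z, (1 : ℝ) / q := by
    rw [Finset.mul_sum]
    refine Finset.sum_le_sum fun q hq => ?_
    obtain ⟨h1, h2, h3⟩ := hmem q hq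
    rw [mul_one_div]
    gcongr
  set S := ∑ q ∈ primesIoc y z, (1 : ℝ) / q with hS
  constructor
  · have h1 : (Real.log x / u) * S ≤ (Real.log x / u) * ((u - v) / v + η) := by
      have e : (Real.log x / u) * ((u - v) / v + η) =
          Real.log x / v - Real.log x / u + η * Real.log x / u := by field_simp
      have e2 : C ≤ η * Real.log x / u := by rw [le_div_iff₀ hu]; exact hCL
      rw [e]; linarith
    exact le_of_mul_le_mul_left h1 (by positivity)
  · have h1 : (Real.log x / v) * ((u - v) / u - η) ≤ (Real.log x / v) * S := by
      have e : (Real.log x / v) * ((u - v) / u - η) =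
          Real.log x / v - Real.log x / u - η * Real.log x / v := by field_simp
      have e2 : C ≤ η * Real.log x / v := by
        rw [le_div_iff₀ (by linarith)]
        refine le_trans ?_ hCL
        gcongr
      rw [e]; linarith
    exact le_of_mul_le_mul_left h1 (by positivity)

/-! ### Smooth numbers and Buchstab's identity -/

open Classical in
/-- The number `Ψ(x, y)` of positive integers up to `x` all of whose prime factors are at
most `y`. -/
noncomputable def Psi (x y : ℝ) : ℕ :=
  ((Finset.Icc 1 ⌊x⌋₊).filter (fun n => ∀ q : ℕ, q.Prime → q ∣ n → (q : ℝ) ≤ y)).card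

lemma Psi_mono {x y y' : ℝ} (h : y ≤ y') : Psi x y ≤ Psi x y' := by
  classical
  refine Finset.card_le_card fun n hn => ?_
  rw [Finset.mem_filter] at hn ⊢
  exact ⟨hn.1, fun q h1 h2 => (hn.2 q h1 h2).trans h⟩

lemma Psi_le {x y : ℝ} (hx : 0 ≤ x) : (Psi x y : ℝ) ≤ x := by
  classical
  refine le_trans ?_ (Nat.floor_le hx)
  have : Psi x y ≤ (Finset.Icc 1 ⌊x⌋₊).card := Finset.card_filter_le _ _
  rw [Nat.card_Icc] at this
  exact_mod_cast this

lemma Psi_ge {x y : ℝ} (hx : 0 ≤ x) (hxy : x ≤ y) : x - 1 ≤ Psi x y := by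
  classical
  have : Psi x y = ⌊x⌋₊ := by
    rw [Psi, Finset.filter_true_of_mem]
    · simp
    · intro n hn q _ hqn
      rw [Finset.mem_Icc] at hn
      have h1 : (q : ℝ) ≤ n := by exact_mod_cast Nat.le_of_dvd hn.1 hqn
      have h2 : (n : ℝ) ≤ x := (Nat.le_floor_iff hx).1 hn.2
      linarith
  rw [this]
  linarith [Nat.lt_floor_add_one x]

/-- Buchstab's identity: integers that are `z`-smooth but not `y`-smooth are sorted by their
largest prime factor. -/
lemma buchstab {x y z : ℝ} (hx : 0 ≤ x) (hz : 0 ≤ z) (hyz : y ≤ z) :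
    Psi x z = Psi x y + ∑ q ∈ primesIoc y z, Psi (x / q) q := by
  classical
  set S : ℝ → Finset ℕ := fun t => (Finset.Icc 1 ⌊x⌋₊).filter
    (fun n => ∀ q : ℕ, q.Prime → q ∣ n → (q : ℝ) ≤ t) with hS
  have hsub : S y ⊆ S z := by
    intro n hn
    simp only [hS, Finset.mem_filter] at hn ⊢
    exact ⟨hn.1, fun q h1 h2 => (hn.2 q h1 h2).trans hyz⟩
  set g : ℕ → ℕ := fun n => n.primeFactors.sup id with hg
  have hgle : ∀ n q : ℕ, n ≠ 0 → q.Prime → q ∣ n → q ≤ g n := by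
    intro n q hn hq hqn
    exact Finset.le_sup (f := id) (Nat.mem_primeFactors.2 ⟨hq, hqn, hn⟩)
  have hgmem : ∀ n, 2 ≤ n → (g n).Prime ∧ g n ∣ n := by
    intro n hn
    obtain ⟨q, hq, h⟩ := Finset.exists_mem_eq_sup n.primeFactors
      (Nat.nonempty_primeFactors.2 hn) id
    have : g n = q := h
    rw [this]
    exact ⟨Nat.prime_of_mem_primeFactors hq, Nat.dvd_of_mem_primeFactors hq⟩
  have hmaps : ∀ n ∈ S z \ S y, g n ∈ primesIoc y z := by
    intro n hn
    simp only [hS, Finset.mem_sdiff, Finset.mem_filter, Finset.mem_Icc] at hn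
    obtain ⟨⟨hn1, hnz⟩, hny⟩ := hn
    have : ∃ q : ℕ, q.Prime ∧ q ∣ n ∧ y < q := by
      by_contra! hcon
      exact hny ⟨hn1, hcon⟩
    obtain ⟨q, hq, hqn, hyq⟩ := this
    have hn2 : 2 ≤ n := hq.two_le.trans (Nat.le_of_dvd hn1.1 hqn)
    obtain ⟨a, b⟩ := hgmem n hn2
    rw [mem_primesIoc hz]
    refine ⟨a, ?_, hnz _ a b⟩
    have : (q : ℝ) ≤ g n := by exact_mod_cast hgle n q (by omega) hq hqn
    linarith
  have hfib : ∀ q ∈ primesIoc y z,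
      ((S z \ S y).filter (fun n => g n = q)).card = Psi (x / q) q := by
    intro q hq
    rw [mem_primesIoc hz] at hq
    obtain ⟨hqp, hyq, hqz⟩ := hq
    have hq0 : (0 : ℝ) < q := by exact_mod_cast hqp.pos
    rw [Psi]
    symm
    refine Finset.card_bij (fun m _ => m * q) ?_ ?_ ?_
    · intro m hm
      simp only [Finset.mem_filter, Finset.mem_Icc] at hm
      obtain ⟨⟨hm1, hm2⟩, hm3⟩ := hm
      have hmx : m * q ≤ ⌊x⌋₊ := by
        rw [Nat.le_floor_iff (by positivity), le_div_iff₀ hq0] at hm2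
        rw [Nat.le_floor_iff hx]
        push_cast
        exact hm2
      have hpos : 0 < m * q := Nat.mul_pos hm1 hqp.pos
      have hall : ∀ r : ℕ, r.Prime → r ∣ m * q → r ≤ q := by
        intro r hr hrm
        rcases (hr.dvd_mul).1 hrm with h | h
        · exact_mod_cast hm3 r hr h
        · exact Nat.le_of_dvd hqp.pos h
      simp only [hS, Finset.mem_filter, Finset.mem_sdiff, Finset.mem_Icc]
      refine ⟨⟨⟨⟨hpos, hmx⟩, fun r hr hrm => ?_⟩, ?_⟩, ?_⟩
      · have : (r : ℝ) ≤ q := by exact_mod_cast hall r hr hrm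
        linarith
      · rintro ⟨_, h⟩
        have := h q hqp (Dvd.intro_left _ rfl)
        linarith
      · have h2 : 2 ≤ m * q := hqp.two_le.trans (Nat.le_mul_of_pos_left _ hm1)
        obtain ⟨a, b⟩ := hgmem _ h2
        exact le_antisymm (hall _ a b) (hgle _ _ hpos.ne' hqp (Dvd.intro_left _ rfl))
    · intro a _ b _ h
      exact Nat.eq_of_mul_eq_mul_right hqp.pos h
    · intro n hn
      simp only [hS, Finset.mem_filter, Finset.mem_sdiff, Finset.mem_Icc] at hn
      obtain ⟨⟨⟨⟨hn1, hnx⟩, hnz⟩, hny⟩, hgn⟩ := hn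
      have hn2 : 2 ≤ n := by
        by_contra! hlt
        have : n = 1 := by omega
        subst this
        refine hny ⟨⟨le_rfl, hnx⟩, fun r hr hr1 => ?_⟩
        exact absurd (Nat.dvd_one.1 hr1) hr.one_lt.ne'
      have hqn : q ∣ n := hgn ▸ (hgmem n hn2).2
      obtain ⟨m, rfl⟩ := hqn
      have hm0 : 0 < m := by
        rcases Nat.eq_zero_or_pos m with h | h
        · subst h; simp at hn1
        · exact h
      refine ⟨m, ?_, mul_comm _ _⟩
      simp only [Finset.mem_filter, Finset.mem_Icc]
      refine ⟨⟨hm0, ?_⟩, fun r hr hrm => ?_⟩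
      · rw [Nat.le_floor_iff hx] at hnx
        rw [Nat.le_floor_iff (by positivity), le_div_iff₀ hq0]
        push_cast at hnx
        linarith
      · have := hgle (q * m) r (by omega) hr (hrm.mul_left _)
        rw [hgn] at this
        exact_mod_cast this
  have hcard : (S z).card = (S y).card + (S z \ S y).card := by
    rw [add_comm]; exact (Finset.card_sdiff_add_card_eq_card hsub).symm
  have e1 : Psi x z = (S z).card := by simp only [Psi, hS]
  have e2 : Psi x y = (S y).card := by simp only [Psi, hS]
  rw [e1, e2, hcard, Finset.card_eq_sum_card_fiberwise hmaps, Finset.sum_congr rfl hfib]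

section Smooth

open Filter

/-- Asymptotically at least the proportion `c` of the integers up to `x` is `y`-smooth,
whenever `x ≤ y ^ w`. -/
def SmoothLower (w c : ℝ) : Prop :=
  ∀ᶠ x : ℝ in atTop, ∀ y : ℝ, 0 < y → x ≤ y ^ w → c * x ≤ Psi x y

/-- Asymptotically at most the proportion `c` of the integers up to `x` is `y`-smooth,
whenever `y ^ w ≤ x`. -/
def SmoothUpper (w c : ℝ) : Prop :=
  ∀ᶠ x : ℝ in atTop, ∀ y : ℝ, 0 < y → y ^ w ≤ x → (Psi x y : ℝ) ≤ c * x

lemma SmoothLower.mono {w c c' : ℝ} (h : SmoothLower w c) (hc : c' ≤ c) : SmoothLower w c' := by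
  filter_upwards [h, eventually_ge_atTop 0] with x hx hx0 y hy hxy
  exact le_trans (by gcongr) (hx y hy hxy)

lemma SmoothUpper.mono {w c c' : ℝ} (h : SmoothUpper w c) (hc : c ≤ c') : SmoothUpper w c' := by
  filter_upwards [h, eventually_ge_atTop 0] with x hx hx0 y hy hxy
  exact le_trans (hx y hy hxy) (by gcongr)

lemma smoothLower_zero (w : ℝ) : SmoothLower w 0 :=
  Eventually.of_forall fun x y _ _ => by simp

lemma smoothUpper_one (w : ℝ) : SmoothUpper w 1 := by
  filter_upwards [eventually_ge_atTop 0] with x hx0 y hy hxy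
  rw [one_mul]; exact Psi_le hx0

lemma SmoothUpper.nonneg {w c : ℝ} (h : SmoothUpper w c) : 0 ≤ c := by
  obtain ⟨x, hx, hx1, hx2⟩ := (h.and ((eventually_gt_atTop 0).and (eventually_ge_atTop 1))).exists
  have := hx 1 one_pos (by simpa using hx2)
  have h2 : 0 ≤ c * x := le_trans (Nat.cast_nonneg _) this
  exact nonneg_of_mul_nonneg_left h2 hx1

lemma smoothLower_base {w e : ℝ} (hw0 : 0 ≤ w) (hw1 : w ≤ 1) (he : 0 < e) :
    SmoothLower w (1 - e) := by
  filter_upwards [eventually_gt_atTop 1, eventually_ge_atTop (1 / e)] with x hx1 hxe y hy hxy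
  have hy1 : 1 < y := by
    by_contra! hcon
    have := Real.rpow_le_one hy.le hcon hw0
    linarith
  have hyw : y ^ w ≤ y := by
    calc y ^ w ≤ y ^ (1 : ℝ) := Real.rpow_le_rpow_of_exponent_le hy1.le hw1
      _ = y := Real.rpow_one y
  have h1 := Psi_ge (x := x) (y := y) (by linarith) (by linarith)
  rw [div_le_iff₀ he] at hxe
  linarith

/-- Buchstab's identity turns a lower bound at `v` and an upper bound `b` for the smooth parts of
`x / q` into a lower bound at `u`. -/
lemma buchstab_lower {u v a b η : ℝ} (hv : 1 ≤ v) (huv : v < u) (hη : 0 < η) (hb : 0 ≤ b)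
    (h1 : SmoothLower v a)
    (h2 : ∀ᶠ x : ℝ in atTop, ∀ q ∈ primesIoc (x ^ (1 / u)) (x ^ (1 / v)),
      (Psi (x / q) q : ℝ) ≤ b * (x / q)) :
    SmoothLower u (a - b * ((u - v) / v) - η) := by
  have hu : 0 < u := by linarith
  obtain ⟨x₀, _, hx₀⟩ := sum_recip_primes hv huv (η := η / (b + 1)) (by positivity)
  filter_upwards [h1, h2, eventually_ge_atTop x₀, eventually_ge_atTop 1] with x e1 e2 e3 hx1 y hy hxy
  have hx0 : 0 < x := by linarith
  have hyy : x ^ (1 / u) ≤ y := by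
    rw [one_div]
    exact (Real.rpow_inv_le_iff_of_pos hx0.le hy.le hu).2 hxy
  have hyz : x ^ (1 / u) ≤ x ^ (1 / v) := Real.rpow_le_rpow_of_exponent_le hx1 (by gcongr)
  have hz0 : 0 < x ^ (1 / v) := by positivity
  have f1 := e1 (x ^ (1 / v)) hz0 (by
    rw [← Real.rpow_mul hx0.le, one_div_mul_cancel (by linarith), Real.rpow_one])
  have f2 : (Psi x (x ^ (1 / v)) : ℝ) = Psi x (x ^ (1 / u)) +
      ∑ q ∈ primesIoc (x ^ (1 / u)) (x ^ (1 / v)), (Psi (x / q) q : ℝ) := by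
    rw [buchstab hx0.le hz0.le hyz]; push_cast; rfl
  have f3 : ∑ q ∈ primesIoc (x ^ (1 / u)) (x ^ (1 / v)), (Psi (x / q) q : ℝ) ≤
      b * x * ∑ q ∈ primesIoc (x ^ (1 / u)) (x ^ (1 / v)), (1 : ℝ) / q := by
    rw [Finset.mul_sum]
    refine Finset.sum_le_sum fun q hq => (e2 q hq).trans (le_of_eq ?_)
    ring
  have f4 := (hx₀ x e3).1
  have f5 : (Psi x (x ^ (1 / u)) : ℝ) ≤ Psi x y := by exact_mod_cast Psi_mono hyy
  have f6 : b * x * ∑ q ∈ primesIoc (x ^ (1 / u)) (x ^ (1 / v)), (1 : ℝ) / q ≤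
      b * x * ((u - v) / v + η / (b + 1)) := by gcongr
  have f7 : b * (η / (b + 1)) ≤ η := by
    rw [mul_div_assoc', div_le_iff₀ (by positivity)]; nlinarith
  nlinarith

/-- For `q ≤ x ^ (1 / v)` with `v > 1`, the quotient `x / q` tends to infinity with `x`, uniformly
in `q`. -/
lemma tendsto_div_primes {v : ℝ} (hv : 1 < v) {P : ℝ → Prop} (h : ∀ᶠ x : ℝ in atTop, P x) :
    ∀ᶠ x : ℝ in atTop, ∀ q : ℕ, 0 < q → (q : ℝ) ≤ x ^ (1 / v) → P (x / q) := by
  obtain ⟨x₀, hx₀⟩ := eventually_atTop.1 h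
  have hv' : 0 < 1 - 1 / v := by
    rw [sub_pos, div_lt_one (by linarith)]; exact hv
  filter_upwards [(tendsto_rpow_atTop hv').eventually_ge_atTop x₀, eventually_gt_atTop 0]
    with x hx hx0 q hq0 hq
  have hq0' : (0 : ℝ) < q := by exact_mod_cast hq0
  refine hx₀ _ (hx.trans ?_)
  rw [Real.rpow_sub hx0, Real.rpow_one]
  gcongr

/-- For a prime `q` in `(x ^ (1 / u), x ^ (1 / v)]` one has `q ^ (v - 1) ≤ x / q`, so the bound at
`v - 1` controls the sum in Buchstab's identity from above. -/
lemma step_lower {u v a b η : ℝ} (hv : 1 < v) (huv : v < u) (hη : 0 < η)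
    (h1 : SmoothLower v a) (h2 : SmoothUpper (v - 1) b) :
    SmoothLower u (a - b * ((u - v) / v) - η) := by
  refine buchstab_lower hv.le huv hη h2.nonneg h1 ?_
  filter_upwards [tendsto_div_primes hv h2, eventually_gt_atTop 0] with x hx hx0 q hq
  obtain ⟨hqp, hq1, hq2⟩ := (mem_primesIoc (by positivity)).1 hq
  have hq0 : (0 : ℝ) < q := by exact_mod_cast hqp.pos
  refine hx q hqp.pos hq2 q hq0 ?_
  rw [Real.rpow_sub hq0, Real.rpow_one]
  have : (q : ℝ) ^ v ≤ x := by
    rw [one_div] at hq2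
    exact (Real.le_rpow_inv_iff_of_pos hq0.le hx0.le (by linarith)).1 hq2
  gcongr

/-- For a prime `q` in `(x ^ (1 / u), x ^ (1 / v)]` one has `x / q ≤ q ^ (u - 1)`, so the bound at
`u - 1` controls the sum in Buchstab's identity from below. -/
lemma step_upper {u v a b η : ℝ} (hv : 1 < v) (huv : v < u) (hη : 0 < η) (hb : 0 ≤ b)
    (h1 : SmoothUpper v a) (h2 : SmoothLower (u - 1) b) :
    SmoothUpper u (a - b * ((u - v) / u) + η) := by
  have hu : 0 < u := by linarith
  obtain ⟨x₀, _, hx₀⟩ := sum_recip_primes hv.le huv (η := η / (b + 1)) (by positivity)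
  filter_upwards [h1, tendsto_div_primes hv h2, eventually_ge_atTop x₀, eventually_ge_atTop 1]
    with x e1 e2 e3 hx1 y hy hxy
  have hx0 : 0 < x := by linarith
  have hyy : y ≤ x ^ (1 / u) := by
    rw [one_div]
    exact (Real.le_rpow_inv_iff_of_pos hy.le hx0.le hu).2 hxy
  have hyz : x ^ (1 / u) ≤ x ^ (1 / v) :=
    Real.rpow_le_rpow_of_exponent_le hx1 (by gcongr)
  have hz0 : 0 < x ^ (1 / v) := by positivity
  have f1 := e1 (x ^ (1 / v)) hz0 (by
    rw [← Real.rpow_mul hx0.le, one_div_mul_cancel (by linarith), Real.rpow_one])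
  have f2 : (Psi x (x ^ (1 / v)) : ℝ) = Psi x (x ^ (1 / u)) +
      ∑ q ∈ primesIoc (x ^ (1 / u)) (x ^ (1 / v)), (Psi (x / q) q : ℝ) := by
    rw [buchstab hx0.le hz0.le hyz]; push_cast; rfl
  have f3 : b * x * ∑ q ∈ primesIoc (x ^ (1 / u)) (x ^ (1 / v)), (1 : ℝ) / q ≤
      ∑ q ∈ primesIoc (x ^ (1 / u)) (x ^ (1 / v)), (Psi (x / q) q : ℝ) := by
    rw [Finset.mul_sum]
    refine Finset.sum_le_sum fun q hq => ?_
    obtain ⟨hqp, hq1, hq2⟩ := (mem_primesIoc hz0.le).1 hq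
    have hq0 : (0 : ℝ) < q := by exact_mod_cast hqp.pos
    have := e2 q hqp.pos hq2 q hq0 (by
      rw [Real.rpow_sub hq0, Real.rpow_one]
      have : x ≤ (q : ℝ) ^ u := by
        rw [one_div] at hq1
        exact (Real.rpow_inv_le_iff_of_pos hx0.le hq0.le hu).1 hq1.le
      gcongr)
    refine le_trans (le_of_eq ?_) this
    ring
  have f4 := (hx₀ x e3).2
  have f5 : (Psi x y : ℝ) ≤ Psi x (x ^ (1 / u)) := by exact_mod_cast Psi_mono hyy
  have f6 : b * x * ((u - v) / u - η / (b + 1)) ≤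
      b * x * ∑ q ∈ primesIoc (x ^ (1 / u)) (x ^ (1 / v)), (1 : ℝ) / q := by gcongr
  have f7 : b * (η / (b + 1)) ≤ η := by
    rw [mul_div_assoc', div_le_iff₀ (by positivity)]; nlinarith
  nlinarith

/-- The step out of `v = 1`, where `x / q` need not be large and the trivial bound for `Ψ` is used. -/
lemma first_lower {u η : ℝ} (hu : 1 < u) (hη : 0 < η) :
    SmoothLower u (1 - (u - 1) - η) := by
  have h := buchstab_lower (u := u) (v := 1) (a := 1 - η / 2) (b := 1) (η := η / 2) le_rfl hu
    (by positivity) zero_le_one (smoothLower_base zero_le_one le_rfl (by positivity)) (by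
      filter_upwards [eventually_ge_atTop 0] with x hx q hq
      rw [one_mul]
      exact Psi_le (by positivity))
  exact h.mono (by rw [div_one]; linarith)

end Smooth

/-! ### The Dickman function and the density of smooth numbers -/

section Dickman

variable {ρ : ℝ → ℝ}

/-- If `ρ` is nonnegative on `[0, k]`, it is antitone on `[0, k + 1]`. The nonnegativity is a hypothesis
here because it is deduced below, one unit interval at a time, from the density of smooth numbers. -/
lemma rho_antitone (hcont : ContinuousOn ρ (Set.Ici 0))
    (hρ1 : ∀ u : ℝ, 0 ≤ u → u ≤ 1 → ρ u = 1)
    (hρ' : ∀ u : ℝ, 1 < u → HasDerivAt ρ (-(ρ (u - 1)) / u) u) {k : ℝ}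
    (hnn : ∀ w, 0 ≤ w → w ≤ k → 0 ≤ ρ w) {a b : ℝ} (ha : 0 ≤ a) (hab : a ≤ b)
    (hb : b ≤ k + 1) : ρ b ≤ ρ a := by
  have h1 : AntitoneOn ρ (Set.Icc 1 (k + 1)) := by
    refine antitoneOn_of_deriv_nonpos (convex_Icc _ _)
      (hcont.mono fun x hx => by have := hx.1; simp only [Set.mem_Ici]; linarith) ?_ ?_
    · intro x hx
      rw [interior_Icc] at hx
      exact (hρ' x hx.1).differentiableAt.differentiableWithinAt
    · intro x hx
      rw [interior_Icc] at hx
      rw [(hρ' x hx.1).deriv]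
      have := hnn (x - 1) (by linarith [hx.1]) (by linarith [hx.2])
      exact div_nonpos_of_nonpos_of_nonneg (by linarith) (by linarith [hx.1])
  rcases le_total b 1 with hb1 | hb1
  · rw [hρ1 a ha (hab.trans hb1), hρ1 b (ha.trans hab) hb1]
  · rcases le_total a 1 with ha1 | ha1
    · have := h1 (a := 1) (b := b) ⟨le_rfl, by linarith⟩ ⟨hb1, hb⟩ hb1
      rw [hρ1 1 zero_le_one le_rfl] at this
      rwa [hρ1 a ha ha1]
    · exact h1 ⟨ha1, by linarith⟩ ⟨hb1, hb⟩ hab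

/-- First-order bounds for the decrease of `ρ`, from the mean value theorem. -/
lemma rho_sub (hcont : ContinuousOn ρ (Set.Ici 0))
    (hρ1 : ∀ u : ℝ, 0 ≤ u → u ≤ 1 → ρ u = 1)
    (hρ' : ∀ u : ℝ, 1 < u → HasDerivAt ρ (-(ρ (u - 1)) / u) u) {k : ℝ}
    (hnn : ∀ w, 0 ≤ w → w ≤ k → 0 ≤ ρ w) {v w : ℝ} (hv : 1 ≤ v) (hvw : v < w)
    (hw : w ≤ k + 1) :
    ρ v - ρ w ≤ ρ (v - 1) * ((w - v) / v) ∧ ρ (w - 1) * ((w - v) / w) ≤ ρ v - ρ w := by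
  obtain ⟨c, ⟨hc1, hc2⟩, hc⟩ := exists_hasDerivAt_eq_slope ρ (fun u => -(ρ (u - 1)) / u) hvw
    (hcont.mono fun x hx => by have := hx.1; simp only [Set.mem_Ici]; linarith)
    (fun x hx => hρ' x (by linarith [hx.1]))
  have hc0 : 0 < c := by linarith
  have e : ρ v - ρ w = ρ (c - 1) * ((w - v) / c) := by
    have : w - v ≠ 0 := by linarith
    field_simp at hc ⊢
    linarith
  have m1 := rho_antitone hcont hρ1 hρ' hnn (a := v - 1) (b := c - 1) (by linarith) (by linarith)
    (by linarith)
  have m2 := rho_antitone hcont hρ1 hρ' hnn (a := c - 1) (b := w - 1) (by linarith) (by linarith)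
    (by linarith)
  have n1 := hnn (w - 1) (by linarith) (by linarith)
  have hwv : 0 < w - v := by linarith
  rw [e]
  constructor
  · have : (w - v) / c ≤ (w - v) / v := by gcongr
    have : 0 ≤ (w - v) / c := by positivity
    have : 0 ≤ ρ (v - 1) := by linarith
    gcongr
  · have : (w - v) / w ≤ (w - v) / c := by gcongr
    have : 0 ≤ (w - v) / w := div_nonneg (by linarith) (by linarith)
    have : 0 ≤ ρ (c - 1) := by linarith
    gcongr

lemma rho_le_one (hcont : ContinuousOn ρ (Set.Ici 0))
    (hρ1 : ∀ u : ℝ, 0 ≤ u → u ≤ 1 → ρ u = 1)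
    (hρ' : ∀ u : ℝ, 1 < u → HasDerivAt ρ (-(ρ (u - 1)) / u) u) {k : ℝ}
    (hnn : ∀ w, 0 ≤ w → w ≤ k → 0 ≤ ρ w) {b : ℝ} (hb0 : 0 ≤ b)
    (hb : b ≤ k + 1) : ρ b ≤ 1 := by
  have := rho_antitone hcont hρ1 hρ' hnn le_rfl hb0 hb
  rwa [hρ1 0 le_rfl zero_le_one] at this

lemma rho_lipschitz (hcont : ContinuousOn ρ (Set.Ici 0))
    (hρ1 : ∀ u : ℝ, 0 ≤ u → u ≤ 1 → ρ u = 1)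
    (hρ' : ∀ u : ℝ, 1 < u → HasDerivAt ρ (-(ρ (u - 1)) / u) u) {k : ℝ}
    (hnn : ∀ w, 0 ≤ w → w ≤ k → 0 ≤ ρ w) {a b : ℝ} (ha : 0 ≤ a) (hab : a < b)
    (hb : b ≤ k + 1) : ρ a - ρ b ≤ b - a := by
  have key : ∀ a, 1 ≤ a → a < b → ρ a - ρ b ≤ b - a := by
    intro a ha hab
    refine (rho_sub hcont hρ1 hρ' hnn ha hab hb).1.trans ?_
    have h1 := rho_le_one hcont hρ1 hρ' hnn (b := a - 1) (by linarith) (by linarith)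
    have h2 : (b - a) / a ≤ b - a := div_le_self (by linarith) ha
    have h3 : 0 ≤ (b - a) / a := div_nonneg (by linarith) (by linarith)
    nlinarith
  rcases le_total b 1 with hb1 | hb1
  · rw [hρ1 a ha (by linarith), hρ1 b (by linarith) hb1]; linarith
  · rcases le_or_gt 1 a with ha1 | ha1
    · exact key a ha1 hab
    · rcases hb1.eq_or_lt with h | h
      · subst h
        rw [hρ1 a ha ha1.le, hρ1 1 zero_le_one le_rfl]; linarith
      · have := key 1 le_rfl h
        rw [hρ1 1 zero_le_one le_rfl] at this
        rw [hρ1 a ha ha1.le]; linarith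

/-- The proportion of `x ^ (1 / w)`-smooth numbers up to `x` is asymptotically `ρ w` up to an
error `e`. -/
def SmoothDensity (ρ : ℝ → ℝ) (w e : ℝ) : Prop :=
  SmoothLower w (ρ w - e) ∧ SmoothUpper w (ρ w + e)

lemma SmoothDensity.mono {w e e' : ℝ} (h : SmoothDensity ρ w e) (he : e ≤ e') :
    SmoothDensity ρ w e' :=
  ⟨h.1.mono (by linarith), h.2.mono (by linarith)⟩

/-- One Euler step from `v` to `w`. The new error is quadratic in the step size. -/
lemma smoothDensity_step (hcont : ContinuousOn ρ (Set.Ici 0))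
    (hρ1 : ∀ u : ℝ, 0 ≤ u → u ≤ 1 → ρ u = 1)
    (hρ' : ∀ u : ℝ, 1 < u → HasDerivAt ρ (-(ρ (u - 1)) / u) u) {k : ℝ}
    (hnn : ∀ w, 0 ≤ w → w ≤ k → 0 ≤ ρ w) {v w e η : ℝ} (hv : 1 < v) (hvw : v < w)
    (hw : w ≤ k + 1) (hη : 0 < η) (hP : SmoothDensity ρ v e)
    (hPv : ∀ e', 0 < e' → SmoothDensity ρ (v - 1) e')
    (hPw : ∀ e', 0 < e' → SmoothDensity ρ (w - 1) e') :
    SmoothDensity ρ w (e + 2 * (w - v) ^ 2 + η) := by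
  obtain ⟨s1, s2⟩ := rho_sub hcont hρ1 hρ' hnn hv.le hvw hw
  have lip := rho_lipschitz hcont hρ1 hρ' hnn (a := v - 1) (b := w - 1) (by linarith)
    (by linarith) (by linarith)
  have le1 := rho_le_one hcont hρ1 hρ' hnn (b := w - 1) (by linarith) (by linarith)
  have ge0 := hnn (w - 1) (by linarith) (by linarith)
  have hh : 0 < w - v := by linarith
  have hv0 : 0 < v := by linarith
  have hw0 : 0 < w := by linarith
  set h := w - v with hhdef
  have q0 : 0 ≤ h / v := by positivity
  have q0' : 0 ≤ h / w := by positivity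
  have q1 : h / v ≤ h := div_le_self hh.le hv.le
  have q2 : h / v - h / w ≤ h ^ 2 := by
    have : h / v - h / w = h ^ 2 / (v * w) := by
      field_simp; rw [hhdef]
    rw [this]
    exact div_le_self (by positivity) (by nlinarith)
  have qw : h / w ≤ 1 := by rw [div_le_one hw0]; linarith
  have key : ρ (v - 1) * (h / v) - ρ (w - 1) * (h / w) ≤ 2 * h ^ 2 := by
    have a1 : ρ (v - 1) * (h / v) ≤ (ρ (w - 1) + h) * (h / v) := by
      gcongr; linarith
    have a2 : ρ (w - 1) * (h / v - h / w) ≤ 1 * h ^ 2 := by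
      have : 0 ≤ h / v - h / w := by
        rw [sub_nonneg]; gcongr
      gcongr
    have a3 : h * (h / v) ≤ h * h := by gcongr
    nlinarith
  constructor
  · have hδ : 0 < η / (2 * (h / v + 1)) := by positivity
    refine (step_lower hv hvw (half_pos hη) hP.1 (hPv (η / (2 * (h / v + 1))) hδ).2).mono ?_
    have : η / (2 * (h / v + 1)) * (h / v) ≤ η / 2 := by
      rw [div_mul_eq_mul_div, div_le_div_iff₀ (by positivity) (by norm_num)]
      nlinarith
    rw [← hhdef]
    nlinarith
  · have hL : SmoothLower (w - 1) (max 0 (ρ (w - 1) - η / 2)) := by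
      rcases max_choice 0 (ρ (w - 1) - η / 2) with hm | hm <;> rw [hm]
      · exact smoothLower_zero _
      · exact (hPw _ (half_pos hη)).1
    refine (step_upper hv hvw (half_pos hη) (le_max_left _ _) hP.2 hL).mono ?_
    have b1 : (ρ (w - 1) - η / 2) * (h / w) ≤ max 0 (ρ (w - 1) - η / 2) * (h / w) := by
      gcongr; exact le_max_right _ _
    rw [← hhdef]
    nlinarith

/-- De Bruijn's theorem on smooth numbers, with a qualitative error term. The induction on `k` also
shows that `ρ` is nonnegative on `[0, k + 1]`, being the limit of the ratios `Ψ(x, y) / x`. -/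
theorem smoothDensity_all (hcont : ContinuousOn ρ (Set.Ici 0))
    (hρ1 : ∀ u : ℝ, 0 ≤ u → u ≤ 1 → ρ u = 1)
    (hρ' : ∀ u : ℝ, 1 < u → HasDerivAt ρ (-(ρ (u - 1)) / u) u) (k : ℕ) :
    ∀ w : ℝ, 0 ≤ w → w ≤ k + 1 → ∀ e : ℝ, 0 < e → SmoothDensity ρ w e := by
  have base : ∀ w : ℝ, 0 ≤ w → w ≤ 1 → ∀ e : ℝ, 0 < e → SmoothDensity ρ w e := by
    intro w hw0 hw1 e he
    rw [SmoothDensity, hρ1 w hw0 hw1]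
    exact ⟨smoothLower_base hw0 hw1 he, (smoothUpper_one w).mono (by linarith)⟩
  induction k with
  | zero =>
    intro w hw0 hw1
    exact base w hw0 (by simpa using hw1)
  | succ k ih =>
    intro w hw0 hw1 e he
    push_cast at hw1
    have hnn : ∀ w, 0 ≤ w → w ≤ (k + 1 : ℝ) → 0 ≤ ρ w := by
      intro w h0 h1
      refine le_of_forall_pos_le_add fun e he => ?_
      exact (ih w h0 h1 e he).2.nonneg
    rcases le_or_gt w 1 with h1 | h1
    · exact base w hw0 h1 e he
    -- Euler's method on `[1, w]` with `n` steps of length `h`. The errors `2 * h` of the first step and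
    -- `3 * h ^ 2` of each later step add up to at most `h * (2 + 3 * (w - 1)) < e`.
    obtain ⟨n, hn⟩ := exists_nat_gt (max 0 ((w - 1) * (2 + 3 * (w - 1)) / e))
    have hn0 : (0 : ℝ) < n := lt_of_le_of_lt (le_max_left _ _) hn
    have hne : (w - 1) * (2 + 3 * (w - 1)) < n * e := by
      rw [← div_lt_iff₀ he]
      exact lt_of_le_of_lt (le_max_right _ _) hn
    set h : ℝ := (w - 1) / n with hh
    have hh0 : 0 < h := div_pos (by linarith) hn0
    have hnh : n * h = w - 1 := by rw [hh]; field_simp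
    -- Steps start at the node `1 + h`, since `smoothDensity_step` needs `v > 1`.
    have hchain : ∀ j : ℕ, j + 1 ≤ n →
        SmoothDensity ρ (1 + (j + 1 : ℕ) * h) (2 * h + (j + 1 : ℕ) * (3 * h ^ 2)) := by
      intro j
      induction j with
      | zero =>
        intro hj
        have hjR : (1 : ℝ) ≤ n := by exact_mod_cast hj
        have hle : 1 + h ≤ (k + 1 : ℝ) + 1 := by nlinarith
        have s := rho_sub hcont hρ1 hρ' hnn (v := 1) (w := 1 + h) le_rfl (by linarith) hle
        rw [hρ1 1 zero_le_one le_rfl, sub_self, hρ1 0 le_rfl zero_le_one] at s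
        have a1 : (1 + h - 1) / 1 = h := by ring
        rw [a1] at s
        have a2 := rho_le_one hcont hρ1 hρ' hnn (b := 1 + h) (by linarith) hle
        simp only [zero_add, Nat.cast_one, one_mul]
        refine ⟨(first_lower (u := 1 + h) (η := h) (by linarith) hh0).mono ?_,
          (smoothUpper_one _).mono ?_⟩
        · nlinarith
        · nlinarith
      | succ j ihj =>
        intro hj
        have hjR : ((j + 1 + 1 : ℕ) : ℝ) ≤ n := by exact_mod_cast hj
        push_cast at hjR
        have hj0 : (0 : ℝ) ≤ j := Nat.cast_nonneg _
        have hle : 1 + ((j : ℝ) + 1 + 1) * h ≤ (k + 1 : ℝ) + 1 := by nlinarith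
        have := smoothDensity_step hcont hρ1 hρ' hnn (v := 1 + (j + 1 : ℕ) * h)
          (w := 1 + (j + 1 + 1 : ℕ) * h) (η := h ^ 2)
          (by push_cast; nlinarith) (by push_cast; nlinarith) (by push_cast; linarith)
          (by positivity) (ihj (by omega))
          (fun e' he' => ih _ (by push_cast; nlinarith) (by push_cast; nlinarith) e' he')
          (fun e' he' => ih _ (by push_cast; nlinarith) (by push_cast; nlinarith) e' he')
        refine this.mono (le_of_eq ?_)
        push_cast
        ring
    obtain ⟨m, rfl⟩ : ∃ m, n = m + 1 := ⟨n - 1, by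
      have : 0 < n := by exact_mod_cast hn0
      omega⟩
    have hfin := hchain m le_rfl
    rw [hnh] at hfin
    have e1 : 1 + (w - 1) = w := by ring
    rw [e1] at hfin
    refine hfin.mono ?_
    have e2 : 2 * h + (m + 1 : ℕ) * (3 * h ^ 2) = h * (2 + 3 * (w - 1)) := by
      rw [← hnh]; ring
    rw [e2, hh, div_mul_eq_mul_div, div_le_iff₀ hn0]
    linarith

lemma rho_nonneg (hcont : ContinuousOn ρ (Set.Ici 0))
    (hρ1 : ∀ u : ℝ, 0 ≤ u → u ≤ 1 → ρ u = 1)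
    (hρ' : ∀ u : ℝ, 1 < u → HasDerivAt ρ (-(ρ (u - 1)) / u) u) {w : ℝ} (hw : 0 ≤ w) :
    0 ≤ ρ w := by
  obtain ⟨k, hk⟩ := exists_nat_ge w
  refine le_of_forall_pos_le_add fun e he => ?_
  exact (smoothDensity_all hcont hρ1 hρ' k w hw (by linarith) e he).2.nonneg

end Dickman

/-! ### The least power non-residue -/

lemma pow_of_prime_factors {p d : ℕ} (n : ℕ) (hn : 0 < n)
    (h : ∀ q : ℕ, q.Prime → q ∣ n → ∃ x : (ZMod p)ˣ, (x : ZMod p) ^ d = (q : ZMod p)) :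
    ∃ x : (ZMod p)ˣ, (x : ZMod p) ^ d = (n : ZMod p) := by
  induction n using Nat.recOnMul with
  | zero => exact absurd hn (lt_irrefl 0)
  | one => exact ⟨1, by simp⟩
  | prime q hq => exact h q hq dvd_rfl
  | mul a b iha ihb =>
    have ha : 0 < a := Nat.pos_of_mul_pos_right hn
    have hb : 0 < b := Nat.pos_of_mul_pos_left hn
    obtain ⟨x, hx⟩ := iha ha fun q hq hqa => h q hq (hqa.mul_right _)
    obtain ⟨y, hy⟩ := ihb hb fun q hq hqb => h q hq (hqb.mul_left _)
    exact ⟨x * y, by push_cast; rw [mul_pow, hx, hy]⟩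

/-- Detection of `d`-th powers by the powers of a character of order `d`. -/
lemma card_pow_le {p d : ℕ} [Fact p.Prime] (hd : 2 ≤ d) (χ : MulChar (ZMod p) ℂ)
    (hχ : orderOf χ = d) (N : ℕ) (S : Finset ℕ) (hS : S ⊆ Finset.Icc 1 N)
    (hpow : ∀ n ∈ S, ∃ x : (ZMod p)ˣ, (x : ZMod p) ^ d = (n : ZMod p)) {M : ℝ}
    (hM : ∀ ψ : MulChar (ZMod p) ℂ, ψ ≠ 1 → orderOf ψ ∣ d →
      ‖∑ n ∈ Finset.Icc 1 N, ψ (n : ZMod p)‖ ≤ M) :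
    (d : ℝ) * S.card ≤ N + d * M := by
  have hχd : χ ^ d = 1 := by rw [← hχ]; exact pow_orderOf_eq_one χ
  have hval : ∀ x : (ZMod p)ˣ, χ x ^ d = 1 := by
    intro x
    rw [← MulChar.pow_apply_coe, hχd, MulChar.one_apply_coe]
  have hM0 : 0 ≤ M := by
    refine le_trans (norm_nonneg _) (hM χ ?_ (hχ ▸ dvd_rfl))
    rintro rfl
    rw [orderOf_one] at hχ
    omega
  set T : ℕ → ℂ := fun n => ∑ j ∈ Finset.range d, χ (n : ZMod p) ^ j with hT
  have hT1 : ∀ n : ℕ, 0 ≤ (T n).re := by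
    intro n
    by_cases h1 : χ (n : ZMod p) = 1
    · simp [hT, h1]
    by_cases hu : IsUnit (n : ZMod p)
    · obtain ⟨x, hx⟩ := hu
      have : T n = 0 := by
        simp only [hT]
        rw [geom_sum_eq h1, ← hx, hval]
        simp
      simp [this]
    · have : T n = 1 := by
        simp only [hT]
        rw [MulChar.map_nonunit _ hu, geom_sum_eq zero_ne_one, zero_pow (by omega)]
        simp
      simp [this]
  have hT2 : ∀ n ∈ S, (T n).re = d := by
    intro n hn
    obtain ⟨x, hx⟩ := hpow n hn
    have : χ (n : ZMod p) = 1 := by rw [← hx, map_pow, hval]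
    simp [hT, this]
  have low : (d : ℝ) * S.card ≤ (∑ n ∈ Finset.Icc 1 N, T n).re := by
    rw [Complex.re_sum]
    calc (d : ℝ) * S.card = ∑ n ∈ S, (T n).re := by
          rw [Finset.sum_congr rfl hT2]; simp [mul_comm]
      _ ≤ _ := Finset.sum_le_sum_of_subset_of_nonneg hS fun n _ _ => hT1 n
  refine low.trans ((Complex.re_le_norm _).trans ?_)
  have swap : ∑ n ∈ Finset.Icc 1 N, T n =
      ∑ j ∈ Finset.range d, ∑ n ∈ Finset.Icc 1 N, χ (n : ZMod p) ^ j := Finset.sum_comm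
  obtain ⟨m, rfl⟩ : ∃ m, d = m + 1 := ⟨d - 1, by omega⟩
  rw [swap, Finset.sum_range_succ']
  have hj : ∀ j ∈ Finset.range m, ‖∑ n ∈ Finset.Icc 1 N, χ (n : ZMod p) ^ (j + 1)‖ ≤ M := by
    intro j hj
    rw [Finset.mem_range] at hj
    have := hM (χ ^ (j + 1)) (pow_ne_one_of_lt_orderOf (by omega) (by omega))
      (hχ ▸ orderOf_pow_dvd (j + 1))
    simpa only [MulChar.pow_apply' χ (Nat.succ_ne_zero j)] using this
  refine (norm_add_le _ _).trans ?_
  have h1 := norm_sum_le_of_le _ hj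
  simp only [Finset.sum_const, Finset.card_range, nsmul_eq_mul] at h1
  have h2 : ‖∑ n ∈ Finset.Icc 1 N, χ (n : ZMod p) ^ 0‖ = N := by simp
  rw [h2]
  push_cast
  nlinarith

open Filter in
/-- The bound for a single `d`. If it failed, every `y`-smooth integer up to `X` would be a `d`-th
power, where `y = p ^ (1 / (4 * w) + ε)` and `X = p ^ (1 / 4 + δ)`. -/
lemma least_le {ρ : ℝ → ℝ}
    (hcont : ContinuousOn ρ (Set.Ici 0))
    (hρ1 : ∀ u : ℝ, 0 ≤ u → u ≤ 1 → ρ u = 1)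
    (hρ' : ∀ u : ℝ, 1 < u → HasDerivAt ρ (-(ρ (u - 1)) / u) u)
    {d : ℕ} (hd : 2 ≤ d) {w : ℝ} (hw0 : 0 < w) (hw : ρ w = 1 / (d : ℝ)) {ε : ℝ} (hε : 0 < ε) :
    ∃ p₀ : ℕ, ∀ p : ℕ, p₀ ≤ p → p.Prime → d ∣ p - 1 →
      (leastDPowNonRes p d : ℝ) ≤ (p : ℝ) ^ (1 / (4 * w) + ε) := by
  classical
  have hdR : (2 : ℝ) ≤ d := by exact_mod_cast hd
  have hd0 : (0 : ℝ) < d := by linarith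
  have hw1 : 1 < w := by
    by_contra! h
    rw [hρ1 w hw0.le h, eq_div_iff hd0.ne'] at hw
    linarith
  have hnn : ∀ t, 0 ≤ t → t ≤ w → 0 ≤ ρ t := fun t ht _ => rho_nonneg hcont hρ1 hρ' ht
  have hwm : 0 < ρ (w - 1) := by
    have := rho_antitone hcont hρ1 hρ' hnn (a := w - 1) (b := w) (by linarith) (by linarith)
      (by linarith)
    rw [hw] at this
    exact lt_of_lt_of_le (by positivity) this
  set κ := 1 / (4 * w) + ε with hκ
  have hκ0 : 0 < κ := by positivity
  have hκw : κ * w = 1 / 4 + ε * w := by rw [hκ]; field_simp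
  -- `v < w` makes the density `ρ v` of smooth numbers exceed `1 / d`; `v * κ > 1 / 4` leaves room for
  -- `δ > 0` with `X ≤ y ^ v`.
  obtain ⟨v, hv, hvw⟩ : ∃ v, max 1 (1 / 4 / κ) < v ∧ v < w := by
    apply exists_between
    rw [max_lt_iff, div_lt_iff₀ hκ0]
    refine ⟨hw1, ?_⟩
    have : 0 < ε * w := by positivity
    linarith
  rw [max_lt_iff, div_lt_iff₀ hκ0] at hv
  obtain ⟨hv1, hvκ⟩ := hv
  -- The mean value inequality gives strict decrease, as `ρ (w - 1) ≥ ρ w > 0`.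
  have hρv : 1 / (d : ℝ) < ρ v := by
    have := (rho_sub hcont hρ1 hρ' hnn hv1.le hvw (by linarith)).2
    have h2 : 0 < ρ (w - 1) * ((w - v) / w) :=
      mul_pos hwm (div_pos (by linarith) hw0)
    rw [hw] at this
    linarith
  set η := (ρ v - 1 / d) / 4 with hη
  have hη0 : 0 < η := by rw [hη]; linarith
  set δ := min (1 / 8) (v * κ - 1 / 4) with hδ
  have hδ0 : 0 < δ := lt_min (by norm_num) (by linarith)
  obtain ⟨p₁, hp₁⟩ := burgess d hδ0 (min_le_left _ _) hη0
  obtain ⟨k, hk⟩ := exists_nat_ge v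
  have hsm := (smoothDensity_all hcont hρ1 hρ' k v (by linarith) (by linarith) η hη0).1
  have hX : Tendsto (fun p : ℕ => (p : ℝ) ^ (1 / 4 + δ)) atTop atTop :=
    (tendsto_rpow_atTop (by positivity)).comp tendsto_natCast_atTop_atTop
  obtain ⟨p₂, hp₂⟩ := eventually_atTop.1 (hX.eventually hsm)
  refine ⟨max p₁ p₂, fun p hp hpp hdp => ?_⟩
  have : Fact p.Prime := ⟨hpp⟩
  have hp1 : (1 : ℝ) ≤ p := by exact_mod_cast hpp.one_le
  have hp0 : (0 : ℝ) < p := by linarith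
  by_contra! hcon
  set y := (p : ℝ) ^ κ with hy
  have hy0 : 0 < y := by positivity
  have hXy : (p : ℝ) ^ (1 / 4 + δ) ≤ y ^ v := by
    rw [hy, ← Real.rpow_mul hp0.le]
    refine Real.rpow_le_rpow_of_exponent_le hp1 ?_
    have := min_le_right (1 / 8) (v * κ - 1 / 4)
    linarith
  have hΨ := hp₂ p (le_of_max_le_right hp) y hy0 hXy
  set X := (p : ℝ) ^ (1 / 4 + δ) with hXdef
  have hX0 : 0 < X := by positivity
  obtain ⟨χ, hχ⟩ := MulChar.exists_mulChar_orderOf (ZMod p) (R := ℂ) (n := d)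
    (by rw [ZMod.card]; exact hdp) (Complex.isPrimitiveRoot_exp d (by omega))
  have hcard := card_pow_le hd χ hχ ⌊X⌋₊
    ((Finset.Icc 1 ⌊X⌋₊).filter (fun n => ∀ q : ℕ, q.Prime → q ∣ n → (q : ℝ) ≤ y))
    (Finset.filter_subset _ _) (by
      intro n hn
      rw [Finset.mem_filter, Finset.mem_Icc] at hn
      refine pow_of_prime_factors n hn.1.1 fun q hq hqn => ?_
      have hlt : (q : ℝ) < leastDPowNonRes p d := lt_of_le_of_lt (hn.2 q hq hqn) hcon
      have hnot := Nat.notMem_of_lt_sInf (show q < leastDPowNonRes p d by exact_mod_cast hlt)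
      by_contra hno
      exact hnot ⟨hq.pos, hno⟩)
    (M := η * X) (fun ψ hψ hψd => hp₁ p (le_of_max_le_left hp) ψ hψ
      (Nat.le_of_dvd (by omega) hψd) (hψd.trans hdp))
  have e1 : (Psi X y : ℝ) = ((Finset.Icc 1 ⌊X⌋₊).filter
      (fun n => ∀ q : ℕ, q.Prime → q ∣ n → (q : ℝ) ≤ y)).card := by
    simp only [Psi]
  rw [← e1] at hcard
  have e2 : (⌊X⌋₊ : ℝ) ≤ X := Nat.floor_le hX0.le
  have e3 : (d : ℝ) * ((1 / d + 3 * η) * X) ≤ d * Psi X y := by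
    refine mul_le_mul_of_nonneg_left (le_trans (le_of_eq ?_) hΨ) hd0.le
    rw [hη]; ring
  have e4 : (d : ℝ) * ((1 / d + 3 * η) * X) = X + 3 * (d * (η * X)) := by field_simp
  have e5 : 0 < (d : ℝ) * (η * X) := by positivity
  linarith

theorem stmt4 (ρ : ℝ → ℝ)
    (hcont : ContinuousOn ρ (Set.Ici 0))
    (hρ1 : ∀ u : ℝ, 0 ≤ u → u ≤ 1 → ρ u = 1)
    (hρ' : ∀ u : ℝ, 1 < u → HasDerivAt ρ (-(ρ (u - 1)) / u) u)
    (u : ℕ → ℝ)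
    (hu : ∀ d : ℕ, 2 ≤ d → 0 < u d ∧ ρ (u d) = 1 / (d : ℝ))
    (D : ℕ) (hD : 2 ≤ D) (ε : ℝ) (hε : 0 < ε) :
    ∃ C : ℝ, 0 < C ∧ ∃ p₀ : ℕ, ∀ p : ℕ, p₀ ≤ p → p.Prime →
      ∀ d : ℕ, d ∣ p - 1 → 2 ≤ d → d ≤ D →
        (leastDPowNonRes p d : ℝ) ≤ C * (p : ℝ) ^ (1 / (4 * u d) + ε) := by
  -- There are finitely many `d ≤ D`, so the constant `C = 1` and the largest of the thresholds work.
  have h : ∀ d : ℕ, ∃ p₀ : ℕ, 2 ≤ d → ∀ p : ℕ, p₀ ≤ p → p.Prime → d ∣ p - 1 →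
      (leastDPowNonRes p d : ℝ) ≤ (p : ℝ) ^ (1 / (4 * u d) + ε) := by
    intro d
    by_cases hd : 2 ≤ d
    · obtain ⟨p₀, hp₀⟩ := least_le hcont hρ1 hρ' hd (hu d hd).1 (hu d hd).2 hε
      exact ⟨p₀, fun _ => hp₀⟩
    · exact ⟨0, fun h => absurd h hd⟩
  choose p₀ hp₀ using h
  refine ⟨1, one_pos, (Finset.range (D + 1)).sup p₀, fun p hp hpp d hdp hd hdD => ?_⟩
  rw [one_mul]
  refine hp₀ d hd p (le_trans ?_ hp) hpp hdp
  exact Finset.le_sup (f := p₀) (Finset.mem_range.2 (by omega))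
end

section
/- Let ρ be the Dickman–de Bruijn function and for an integer n ≥ 2 let u(n) be the unique positive real with ρ(u(n)) = 1/n. Then u(n) is strictly increasing in n (equivalently, 1/u(n) is strictly decreasing), and there exist a constant C > 0 and n₀ such that for all n ≥ n₀: |1/u(n) − (log log n − 1)/log n| ≤ C·(log log log n)/(log n · log log n). -/
/-!
The function `ρ` satisfies the averaging identity `v ρ(v) = ∫_{v-1}^v ρ` for `v ≥ 1`. A continuous
function which dominates its average in this sense and is positive on an initial unit interval stays
positive (`pos_of_average`): at its first zero the average would be positive. This gives `ρ > 0`,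
hence the strict monotonicity of `ρ` on `[1, ∞)` and of `u`, and it also allows `ρ` to be compared
with trial functions `exp (-g)`. If `g' ≤ γ` on `[v-1, v]` then
`∫_{v-1}^v exp (-g) ≤ exp (-g v) (exp γ - 1) / γ`, so `exp (-g)` is a supersolution as soon as
`exp γ - 1 ≤ v γ`; subsolutions are obtained by reversing all inequalities.

With `l = log v`, the choice `g = v (l + log l - 1) - 2 v / l` gives a supersolution (take
`γ = l + log l`), and `g = v (l + log l - 1) + 4 v log l / l` a subsolution, for large `v`. Therefore
`-log ρ(v) = v (l + log l - 1) + O(v log l / l)`.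

Writing `L = log n = -log ρ(u n)` and `v = u n`, this reads `L / v = l + log l - 1 + O(log l / l)`.
Taking logarithms, `log L = l + log l + O(log l / l)`, hence `L / v = log L - 1 + O(log l / l)`.
Dividing by `L`, and noting `l ≤ log L ≤ 2 l`, gives the stated estimate.
-/

open Set Filter Topology

/-! ### Averaging inequalities and comparison -/

/-- Positivity principle: a function bounded below by the average `(1/v) ∫_{v-1}^v φ` cannot
lose positivity after an initial unit interval. -/
lemma pos_of_average {φ : ℝ → ℝ} {a : ℝ} (ha : 0 < a) (hc : ContinuousOn φ (Ici (a - 1)))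
    (h0 : ∀ t ∈ Icc (a - 1) a, 0 < φ t)
    (hav : ∀ v, a ≤ v → ∫ t in (v - 1)..v, φ t ≤ v * φ v) :
    ∀ v, a ≤ v → 0 < φ v := by
  intro x hx
  by_contra hneg
  have hneg : φ x ≤ 0 := not_lt.mp hneg
  have hcl : IsClosed (Icc a x ∩ φ ⁻¹' Iic 0) :=
    (hc.mono (fun t ht => by simp only [mem_Ici]; linarith [ht.1])).preimage_isClosed_of_isClosed
      isClosed_Icc isClosed_Iic
  have hcpt : IsCompact (Icc a x ∩ φ ⁻¹' Iic 0) :=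
    isCompact_Icc.of_isClosed_subset hcl inter_subset_left
  obtain ⟨s, ⟨⟨hs1, hs2⟩, hs0⟩, hsmin⟩ := hcpt.exists_isLeast ⟨x, ⟨hx, le_rfl⟩, hneg⟩
  have hs0 : φ s ≤ 0 := hs0
  have hpos : ∀ t ∈ Ioo (s - 1) s, 0 < φ t := by
    intro t ht
    by_cases hta : t ≤ a
    · exact h0 t ⟨by linarith [ht.1], hta⟩
    · by_contra hcon
      have : s ≤ t := hsmin ⟨⟨by linarith, by linarith [ht.2]⟩, not_lt.mp hcon⟩
      linarith [ht.2]
  have hint : IntervalIntegrable φ MeasureTheory.volume (s - 1) s := by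
    apply ContinuousOn.intervalIntegrable
    refine hc.mono fun t ht => ?_
    rw [uIcc_of_le (by linarith)] at ht
    simp only [mem_Ici]; linarith [ht.1]
  have h1 := intervalIntegral.intervalIntegral_pos_of_pos_on hint hpos (by linarith)
  have h2 := hav s hs1
  nlinarith

lemma integral_exp_tilt {v γ b : ℝ} (hγ : 0 < γ) :
    ∫ t in (v - 1)..v, Real.exp (b + γ * (v - t)) = Real.exp b * ((Real.exp γ - 1) / γ) := by
  have hd : ∀ t ∈ uIcc (v - 1) v,
      HasDerivAt (fun t => -(Real.exp (b + γ * (v - t)) / γ)) (Real.exp (b + γ * (v - t))) t := by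
    intro t _
    have h1 : HasDerivAt (fun t : ℝ => b + γ * (v - t)) (γ * (-1)) t :=
      (((hasDerivAt_id t).const_sub v).const_mul γ).const_add b
    refine ((h1.exp.div_const γ).neg).congr_deriv ?_
    field_simp
  rw [intervalIntegral.integral_eq_sub_of_hasDerivAt hd
    (Continuous.intervalIntegrable (by fun_prop) _ _)]
  have e : b + γ * (v - (v - 1)) = b + γ := by ring
  rw [e, sub_self, mul_zero, add_zero, Real.exp_add]
  field_simp
  ring

/-- If `g' ≤ γ` on `[v-1, v]`, then `exp (-g t) ≤ exp (-g v + γ (v - t))` there, so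
`exp γ - 1 ≤ v γ` makes `exp (-g)` a supersolution at `v`. -/
lemma supersolution {g g' : ℝ → ℝ} {v γ : ℝ} (hγ : 0 < γ)
    (hd : ∀ t ∈ Icc (v - 1) v, HasDerivAt g (g' t) t)
    (hle : ∀ t ∈ Icc (v - 1) v, g' t ≤ γ) (hE : Real.exp γ - 1 ≤ v * γ) :
    ∫ t in (v - 1)..v, Real.exp (-g t) ≤ v * Real.exp (-g v) := by
  have hcont : ContinuousOn g (Icc (v - 1) v) := fun t ht => (hd t ht).continuousAt.continuousWithinAt
  have key : ∀ t ∈ Icc (v - 1) v, Real.exp (-g t) ≤ Real.exp (-g v + γ * (v - t)) := by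
    intro t ht
    have := (convex_Icc (v - 1) v).image_sub_le_mul_sub_of_deriv_le hcont
      (fun s hs => (hd s (interior_subset hs)).differentiableAt.differentiableWithinAt)
      (C := γ) (fun s hs => by
        rw [(hd s (interior_subset hs)).deriv]; exact hle s (interior_subset hs))
      t ht v ⟨by linarith, le_rfl⟩ ht.2
    exact Real.exp_le_exp.mpr (by linarith)
  calc ∫ t in (v - 1)..v, Real.exp (-g t)
      ≤ ∫ t in (v - 1)..v, Real.exp (-g v + γ * (v - t)) := by
        apply intervalIntegral.integral_mono_on (by linarith) _ _ key
        · apply ContinuousOn.intervalIntegrable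
          rw [uIcc_of_le (by linarith)]
          exact Real.continuous_exp.comp_continuousOn hcont.neg
        · exact Continuous.intervalIntegrable (by fun_prop) _ _
    _ = Real.exp (-g v) * ((Real.exp γ - 1) / γ) := integral_exp_tilt hγ
    _ ≤ Real.exp (-g v) * v := by
        gcongr
        rwa [div_le_iff₀ hγ]
    _ = v * Real.exp (-g v) := mul_comm _ _

/-- If `g' ≥ γ` on `[v-1, v]`, then `exp (-g t) ≥ exp (-g v + γ (v - t))` there, so
`exp γ - 1 ≥ v γ` makes `exp (-g)` a subsolution at `v`. -/
lemma subsolution {g g' : ℝ → ℝ} {v γ : ℝ} (hγ : 0 < γ)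
    (hd : ∀ t ∈ Icc (v - 1) v, HasDerivAt g (g' t) t)
    (hle : ∀ t ∈ Icc (v - 1) v, γ ≤ g' t) (hE : v * γ ≤ Real.exp γ - 1) :
    v * Real.exp (-g v) ≤ ∫ t in (v - 1)..v, Real.exp (-g t) := by
  have hcont : ContinuousOn g (Icc (v - 1) v) := fun t ht => (hd t ht).continuousAt.continuousWithinAt
  have key : ∀ t ∈ Icc (v - 1) v, Real.exp (-g v + γ * (v - t)) ≤ Real.exp (-g t) := by
    intro t ht
    have := (convex_Icc (v - 1) v).mul_sub_le_image_sub_of_le_deriv hcont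
      (fun s hs => (hd s (interior_subset hs)).differentiableAt.differentiableWithinAt)
      (C := γ) (fun s hs => by
        rw [(hd s (interior_subset hs)).deriv]; exact hle s (interior_subset hs))
      t ht v ⟨by linarith, le_rfl⟩ ht.2
    exact Real.exp_le_exp.mpr (by linarith)
  calc v * Real.exp (-g v) = Real.exp (-g v) * v := mul_comm _ _
    _ ≤ Real.exp (-g v) * ((Real.exp γ - 1) / γ) := by
        gcongr
        rwa [le_div_iff₀ hγ]
    _ = ∫ t in (v - 1)..v, Real.exp (-g v + γ * (v - t)) := (integral_exp_tilt hγ).symm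
    _ ≤ ∫ t in (v - 1)..v, Real.exp (-g t) := by
        apply intervalIntegral.integral_mono_on (by linarith) _ _ key
        · exact Continuous.intervalIntegrable (by fun_prop) _ _
        · apply ContinuousOn.intervalIntegrable
          rw [uIcc_of_le (by linarith)]
          exact Real.continuous_exp.comp_continuousOn hcont.neg

/-! ### Basic properties of the Dickman function -/

/-- The delay equation in integrated form: both sides have the same derivative for `v > 1` and
equal `1` at `v = 1`. -/
lemma rho_average {ρ : ℝ → ℝ} (hcont : ContinuousOn ρ (Set.Ici 0))
    (hρ1 : ∀ u : ℝ, 0 ≤ u → u ≤ 1 → ρ u = 1)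
    (hρ' : ∀ u : ℝ, 1 < u → HasDerivAt ρ (-(ρ (u - 1)) / u) u) : ∀ v, 1 ≤ v → ∫ t in (v - 1)..v, ρ t = v * ρ v := by
  -- `r` agrees with `ρ` on `[0, ∞)` and is continuous on all of `ℝ`.
  set r : ℝ → ℝ := fun t => ρ (max t 0) with hr
  have hrc : Continuous r :=
    hcont.comp_continuous (by fun_prop) (fun t => le_max_right t 0)
  have hrr : ∀ t, 0 ≤ t → r t = ρ t := fun t ht => by simp [hr, max_eq_left ht]
  have hprim : ∀ t, HasDerivAt (fun x => ∫ s in (0 : ℝ)..x, r s) (r t) t := fun t =>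
    intervalIntegral.integral_hasDerivAt_right (hrc.intervalIntegrable _ _)
      (hrc.stronglyMeasurableAtFilter _ _) hrc.continuousAt
  set H : ℝ → ℝ := fun v => v * r v - ((∫ s in (0 : ℝ)..v, r s) - ∫ s in (0 : ℝ)..(v - 1), r s)
    with hH
  have hPc : Continuous (fun x => ∫ s in (0 : ℝ)..x, r s) :=
    continuous_iff_continuousAt.mpr fun t => (hprim t).continuousAt
  have hHc : Continuous H :=
    (continuous_id.mul hrc).sub (hPc.sub (hPc.comp (continuous_id.sub continuous_const)))
  have hHd : ∀ v, 1 < v → HasDerivAt H 0 v := by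
    intro v hv
    have h1 : HasDerivAt r (-(ρ (v - 1)) / v) v := by
      refine (hρ' v hv).congr_of_eventuallyEq ?_
      filter_upwards [lt_mem_nhds (show (0 : ℝ) < v by linarith)] with t ht using hrr t ht.le
    have h2 : HasDerivAt (fun x => ∫ s in (0 : ℝ)..(x - 1), r s) (r (v - 1)) v :=
      (hprim (v - 1)).comp_sub_const v 1
    refine (((hasDerivAt_id v).mul h1).sub ((hprim v).sub h2)).congr_deriv ?_
    rw [hrr (v - 1) (by linarith)]
    have : v ≠ 0 := by linarith
    simp only [id]
    field_simp
    ring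
  intro v hv
  have hconst : H v = H 1 := by
    have hdiff : DifferentiableOn ℝ H (interior (Ici 1)) := fun x hx => by
      rw [interior_Ici] at hx
      exact (hHd x hx).differentiableAt.differentiableWithinAt
    have hderiv : ∀ x ∈ interior (Ici (1 : ℝ)), deriv H x = 0 := fun x hx => by
      rw [interior_Ici] at hx
      exact (hHd x hx).deriv
    have h1 := (convex_Ici (1 : ℝ)).image_sub_le_mul_sub_of_deriv_le hHc.continuousOn hdiff
      (fun x hx => (hderiv x hx).le) 1 self_mem_Ici v hv hv
    have h2 := (convex_Ici (1 : ℝ)).mul_sub_le_image_sub_of_le_deriv hHc.continuousOn hdiff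
      (fun x hx => (hderiv x hx).ge) 1 self_mem_Ici v hv hv
    linarith
  have hH1 : H 1 = 0 := by
    have : ∫ s in (0 : ℝ)..1, r s = ∫ s in (0 : ℝ)..1, (1 : ℝ) := by
      apply intervalIntegral.integral_congr
      intro t ht
      rw [uIcc_of_le zero_le_one] at ht
      simp only [hrr t ht.1, hρ1 t ht.1 ht.2]
    simp [hH, this, hrr 1 zero_le_one, hρ1 1 zero_le_one le_rfl]
  rw [hH1] at hconst
  have e1 : (∫ s in (0 : ℝ)..v, r s) - ∫ s in (0 : ℝ)..(v - 1), r s = ∫ s in (v - 1)..v, r s :=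
    intervalIntegral.integral_interval_sub_left (hrc.intervalIntegrable _ _)
      (hrc.intervalIntegrable _ _)
  have e2 : ∫ s in (v - 1)..v, r s = ∫ s in (v - 1)..v, ρ s := by
    apply intervalIntegral.integral_congr
    intro t ht
    rw [uIcc_of_le (by linarith)] at ht
    exact hrr t (by linarith [ht.1])
  simp only [hH] at hconst
  rw [e1, e2, hrr v (by linarith)] at hconst
  linarith

lemma rho_pos {ρ : ℝ → ℝ} (hcont : ContinuousOn ρ (Set.Ici 0))
    (hρ1 : ∀ u : ℝ, 0 ≤ u → u ≤ 1 → ρ u = 1)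
    (hρ' : ∀ u : ℝ, 1 < u → HasDerivAt ρ (-(ρ (u - 1)) / u) u) : ∀ v, 0 ≤ v → 0 < ρ v := by
  intro v hv
  rcases le_total v 1 with h | h
  · rw [hρ1 v hv h]; exact one_pos
  · refine pos_of_average one_pos (by simpa using hcont) ?_ ?_ v h
    · intro t ht
      rw [hρ1 t (by linarith [ht.1]) ht.2]; exact one_pos
    · exact fun v hv => (rho_average hcont hρ1 hρ' v hv).le

lemma rho_strictAnti {ρ : ℝ → ℝ} (hcont : ContinuousOn ρ (Set.Ici 0))
    (hρ1 : ∀ u : ℝ, 0 ≤ u → u ≤ 1 → ρ u = 1)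
    (hρ' : ∀ u : ℝ, 1 < u → HasDerivAt ρ (-(ρ (u - 1)) / u) u) : StrictAntiOn ρ (Ici 1) := by
  apply strictAntiOn_of_deriv_neg (convex_Ici 1)
    (hcont.mono (Ici_subset_Ici.mpr zero_le_one))
  intro x hx
  rw [interior_Ici, mem_Ioi] at hx
  rw [(hρ' x hx).deriv]
  have := rho_pos hcont hρ1 hρ' (x - 1) (by linarith)
  exact div_neg_of_neg_of_pos (by linarith) (by linarith)

/-- Comparison of `ρ` with supersolutions; the constant absorbs the initial interval. -/
lemma rho_upper {ρ : ℝ → ℝ} (hcont : ContinuousOn ρ (Set.Ici 0))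
    (hρ1 : ∀ u : ℝ, 0 ≤ u → u ≤ 1 → ρ u = 1)
    (hρ' : ∀ u : ℝ, 1 < u → HasDerivAt ρ (-(ρ (u - 1)) / u) u)
    {g g' : ℝ → ℝ} {A : ℝ} (hA : 1 ≤ A)
    (hd : ∀ t, A - 1 ≤ t → HasDerivAt g (g' t) t)
    (hγ : ∀ v, A ≤ v → ∃ γ, 0 < γ ∧ (∀ t ∈ Icc (v - 1) v, g' t ≤ γ) ∧ Real.exp γ - 1 ≤ v * γ) :
    ∃ K, ∀ v, A ≤ v → Real.log (ρ v) + g v ≤ K := by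
  have hρc : ContinuousOn ρ (Ici (A - 1)) := hcont.mono (Ici_subset_Ici.mpr (by linarith))
  have hgc : ContinuousOn g (Ici (A - 1)) := fun t ht => (hd t ht).continuousAt.continuousWithinAt
  have hpos : ∀ t, A - 1 ≤ t → 0 < ρ t := fun t ht => rho_pos hcont hρ1 hρ' t (by linarith)
  obtain ⟨M, hM⟩ := (isCompact_Icc (a := A - 1) (b := A)).exists_bound_of_continuousOn
    (f := fun t => Real.log (ρ t) + g t)
    (((hρc.log fun t ht => (hpos t ht).ne').add hgc).mono Icc_subset_Ici_self)
  have hIcc : ∀ v, A ≤ v → uIcc (v - 1) v ⊆ Ici (A - 1) := fun v hv t ht => by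
    rw [uIcc_of_le (by linarith)] at ht
    simp only [mem_Ici]; linarith [ht.1]
  have hfc : ContinuousOn (fun t => Real.exp (-(g t - (M + 1)))) (Ici (A - 1)) :=
    Real.continuous_exp.comp_continuousOn (hgc.sub continuousOn_const).neg
  have hmain := pos_of_average (φ := fun t => Real.exp (-(g t - (M + 1))) - ρ t) (a := A)
    (by linarith) (hfc.sub hρc) ?_ ?_
  · refine ⟨M + 1, fun v hv => ?_⟩
    have h1 := hmain v hv
    have h2 := (Real.log_lt_iff_lt_exp (hpos v (by linarith))).mpr (sub_pos.mp h1)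
    linarith
  · intro t ht
    have h1 := (abs_le.mp (hM t ht)).2
    rw [sub_pos, ← Real.log_lt_iff_lt_exp (hpos t ht.1)]
    linarith
  · intro v hv
    obtain ⟨γ, h0, h1, h2⟩ := hγ v hv
    rw [intervalIntegral.integral_sub ((hfc.mono (hIcc v hv)).intervalIntegrable)
      ((hρc.mono (hIcc v hv)).intervalIntegrable), rho_average hcont hρ1 hρ' v (by linarith),
      mul_sub]
    have := supersolution (g := fun t => g t - (M + 1)) (g' := g') h0
      (fun t ht => (hd t (by linarith [ht.1])).sub_const _) h1 h2
    linarith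

/-- Comparison of `ρ` with subsolutions; the constant absorbs the initial interval. -/
lemma rho_lower {ρ : ℝ → ℝ} (hcont : ContinuousOn ρ (Set.Ici 0))
    (hρ1 : ∀ u : ℝ, 0 ≤ u → u ≤ 1 → ρ u = 1)
    (hρ' : ∀ u : ℝ, 1 < u → HasDerivAt ρ (-(ρ (u - 1)) / u) u)
    {g g' : ℝ → ℝ} {A : ℝ} (hA : 1 ≤ A)
    (hd : ∀ t, A - 1 ≤ t → HasDerivAt g (g' t) t)
    (hγ : ∀ v, A ≤ v → ∃ γ, 0 < γ ∧ (∀ t ∈ Icc (v - 1) v, γ ≤ g' t) ∧ v * γ ≤ Real.exp γ - 1) :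
    ∃ K, ∀ v, A ≤ v → K ≤ Real.log (ρ v) + g v := by
  have hρc : ContinuousOn ρ (Ici (A - 1)) := hcont.mono (Ici_subset_Ici.mpr (by linarith))
  have hgc : ContinuousOn g (Ici (A - 1)) := fun t ht => (hd t ht).continuousAt.continuousWithinAt
  have hpos : ∀ t, A - 1 ≤ t → 0 < ρ t := fun t ht => rho_pos hcont hρ1 hρ' t (by linarith)
  obtain ⟨M, hM⟩ := (isCompact_Icc (a := A - 1) (b := A)).exists_bound_of_continuousOn
    (f := fun t => Real.log (ρ t) + g t)
    (((hρc.log fun t ht => (hpos t ht).ne').add hgc).mono Icc_subset_Ici_self)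
  have hIcc : ∀ v, A ≤ v → uIcc (v - 1) v ⊆ Ici (A - 1) := fun v hv t ht => by
    rw [uIcc_of_le (by linarith)] at ht
    simp only [mem_Ici]; linarith [ht.1]
  have hfc : ContinuousOn (fun t => Real.exp (-(g t + (M + 1)))) (Ici (A - 1)) :=
    Real.continuous_exp.comp_continuousOn (hgc.add continuousOn_const).neg
  have hmain := pos_of_average (φ := fun t => ρ t - Real.exp (-(g t + (M + 1)))) (a := A)
    (by linarith) (hρc.sub hfc) ?_ ?_
  · refine ⟨-(M + 1), fun v hv => ?_⟩
    have h1 := hmain v hv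
    have h2 := (Real.lt_log_iff_exp_lt (hpos v (by linarith))).mpr (sub_pos.mp h1)
    linarith
  · intro t ht
    have h1 := (abs_le.mp (hM t ht)).1
    rw [sub_pos, ← Real.lt_log_iff_exp_lt (hpos t ht.1)]
    linarith
  · intro v hv
    obtain ⟨γ, h0, h1, h2⟩ := hγ v hv
    rw [intervalIntegral.integral_sub ((hρc.mono (hIcc v hv)).intervalIntegrable)
      ((hfc.mono (hIcc v hv)).intervalIntegrable), rho_average hcont hρ1 hρ' v (by linarith),
      mul_sub]
    have := subsolution (g := fun t => g t + (M + 1)) (g' := g') h0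
      (fun t ht => (hd t (by linarith [ht.1])).add_const _) h1 h2
    linarith

/-! ### Trial functions -/

lemma hasDerivAt_upperTrial {t : ℝ} (ht : 1 < t) :
    HasDerivAt (fun t => t * (Real.log t + Real.log (Real.log t) - 1) - 2 * (t / Real.log t))
      (Real.log t + Real.log (Real.log t) - 1 / Real.log t + 2 / Real.log t ^ 2) t := by
  have h0 : t ≠ 0 := by linarith
  have hl : Real.log t ≠ 0 := (Real.log_pos ht).ne'
  have h1 := Real.hasDerivAt_log h0
  have h2 := h1.log hl
  refine (((hasDerivAt_id t).mul ((h1.add h2).sub_const 1)).sub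
    (((hasDerivAt_id t).div h1 hl).const_mul 2)).congr_deriv ?_
  simp only [id, Pi.add_apply]
  field_simp
  ring

lemma hasDerivAt_lowerTrial {t : ℝ} (ht : 1 < t) :
    HasDerivAt (fun t => t * (Real.log t + Real.log (Real.log t) - 1)
        + 4 * (t * Real.log (Real.log t) / Real.log t))
      (Real.log t + Real.log (Real.log t) + 1 / Real.log t
        + 4 * (Real.log (Real.log t) / Real.log t + 1 / Real.log t ^ 2
          - Real.log (Real.log t) / Real.log t ^ 2)) t := by
  have h0 : t ≠ 0 := by linarith
  have hl : Real.log t ≠ 0 := (Real.log_pos ht).ne'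
  have h1 := Real.hasDerivAt_log h0
  have h2 := h1.log hl
  refine (((hasDerivAt_id t).mul ((h1.add h2).sub_const 1)).add
    ((((hasDerivAt_id t).mul h2).div h1 hl).const_mul 4)).congr_deriv ?_
  simp only [id, Pi.add_apply, Pi.mul_apply]
  field_simp
  ring

/-- The rate is `γ = log v + log log v`, for which `exp γ = v log v`. -/
lemma upperTrial_rate {v : ℝ} (hv : 2 ≤ Real.log (v - 1)) (hv1 : 2 < v) :
    ∃ γ, 0 < γ ∧ (∀ t ∈ Icc (v - 1) v,
      Real.log t + Real.log (Real.log t) - 1 / Real.log t + 2 / Real.log t ^ 2 ≤ γ) ∧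
      Real.exp γ - 1 ≤ v * γ := by
  have hlv : 2 ≤ Real.log v := hv.trans (Real.log_le_log (by linarith) (by linarith))
  have hll : 0 < Real.log (Real.log v) := Real.log_pos (by linarith)
  refine ⟨Real.log v + Real.log (Real.log v), by linarith, ?_, ?_⟩
  · intro t ht
    have ht0 : 0 < t := by linarith [ht.1]
    have h1 : Real.log t ≤ Real.log v := Real.log_le_log ht0 ht.2
    have h2 : 2 ≤ Real.log t := hv.trans (Real.log_le_log (by linarith) ht.1)
    have h3 : Real.log (Real.log t) ≤ Real.log (Real.log v) := Real.log_le_log (by linarith) h1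
    have h4 : 2 / Real.log t ^ 2 ≤ 1 / Real.log t := by
      rw [div_le_div_iff₀ (by positivity) (by linarith)]
      nlinarith
    linarith
  · rw [Real.exp_add, Real.exp_log (by linarith), Real.exp_log (by linarith)]
    nlinarith

/-- The rate is `γ = log (v-1) + log log (v-1) + 2 log log v / log v`: the last summand uses that
`log x / x` decreases for `x ≥ e`, and multiplies `exp γ` by enough to beat `v γ`. -/
lemma lowerTrial_rate {v : ℝ} (hv : Real.exp 1 + 4 ≤ Real.log (v - 1)) (hv1 : 2 < v)
    (hbig : 10 + 4 * Real.log v ≤ v) :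
    ∃ γ, 0 < γ ∧ (∀ t ∈ Icc (v - 1) v,
      γ ≤ Real.log t + Real.log (Real.log t) + 1 / Real.log t
        + 4 * (Real.log (Real.log t) / Real.log t + 1 / Real.log t ^ 2
          - Real.log (Real.log t) / Real.log t ^ 2)) ∧
      v * γ ≤ Real.exp γ - 1 := by
  have he := Real.exp_pos 1
  have hmono : Real.log (v - 1) ≤ Real.log v := Real.log_le_log (by linarith) (by linarith)
  have hw1 : 1 ≤ Real.log (Real.log (v - 1)) := by
    rw [Real.le_log_iff_exp_le (by linarith)]; linarith
  have hwm : Real.log (Real.log (v - 1)) ≤ Real.log (Real.log v) :=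
    Real.log_le_log (by linarith) hmono
  set l := Real.log v with hl
  set k := Real.log (v - 1) with hk
  set w := Real.log l with hw
  have hl0 : 0 < l := by linarith
  have hq0 : 0 ≤ w / l := div_nonneg (by linarith) hl0.le
  refine ⟨k + Real.log k + 2 * (w / l), by linarith, ?_, ?_⟩
  · intro t ht
    have h1 : Real.log t ≤ l := Real.log_le_log (by linarith [ht.1]) ht.2
    have h2 : k ≤ Real.log t := Real.log_le_log (by linarith) ht.1
    have h3 : Real.log k ≤ Real.log (Real.log t) := Real.log_le_log (by linarith) h2
    have h4 : w / l ≤ Real.log (Real.log t) / Real.log t :=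
      Real.log_div_self_antitoneOn (show Real.exp 1 ≤ Real.log t by linarith)
        (show Real.exp 1 ≤ l by linarith) h1
    set m := Real.log t
    have hm : 0 < m := by linarith
    have h5 : Real.log m / m ^ 2 ≤ (Real.log m / m) / 2 := by
      rw [div_div, div_le_div_iff₀ (by positivity) (by positivity)]
      nlinarith [mul_nonneg (show 0 ≤ Real.log m by linarith)
        (mul_nonneg hm.le (show 0 ≤ m - 2 by linarith))]
    have h6 : 0 < 1 / m := by positivity
    have h7 : 0 < 1 / m ^ 2 := by positivity
    linarith
  · have hE : Real.exp (k + Real.log k + 2 * (w / l)) = (v - 1) * k * Real.exp (2 * (w / l)) := by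
      rw [Real.exp_add, Real.exp_add, hk, Real.exp_log (by linarith : 0 < v - 1),
        Real.exp_log (by linarith)]
    have hE2 := Real.add_one_le_exp (2 * (w / l))
    -- `log (v - 1) ≥ log v - 1 / (v - 1)`
    have hk2 : (v - 1) * (l - k) ≤ 1 := by
      have h := Real.log_le_sub_one_of_pos (show 0 < v / (v - 1) by
        apply div_pos <;> linarith)
      rw [Real.log_div (by linarith) (by linarith)] at h
      have h' : v / (v - 1) - 1 = 1 / (v - 1) := by
        have : v - 1 ≠ 0 := by linarith
        field_simp
        ring
      rw [h', le_div_iff₀ (by linarith)] at h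
      linarith
    have hwl : w ≤ l := (Real.log_le_sub_one_of_pos hl0).trans (by linarith)
    have hql : w / l * l = w := by field_simp
    have hq1 : w / l ≤ 1 := by rwa [div_le_one hl0]
    have hq4 : 4 * (w / l) ≤ w := by nlinarith
    have hpk : 0 ≤ (v - 1) * k := mul_nonneg (by linarith) (by linarith)
    set q := w / l
    have hP : (v - 1) * k * (2 * q + 1) ≤ Real.exp (k + Real.log k + 2 * q) := by
      rw [hE]; gcongr
    have h1 : (v * l - l - 1) * (2 * q + 1) ≤ (v - 1) * k * (2 * q + 1) := by
      apply mul_le_mul_of_nonneg_right _ (by linarith)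
      linarith
    have h2 : v * (k + Real.log k + 2 * q) ≤ v * (l + w + 2 * q) := by
      apply mul_le_mul_of_nonneg_left _ (by linarith)
      linarith
    have h3 : v * l * q = v * w := by rw [mul_assoc, mul_comm l q, hql]
    have h4 : v * (4 * q) ≤ v * w := mul_le_mul_of_nonneg_left hq4 (by linarith)
    have h5 : (l + 1) * (2 * q + 1) ≤ (l + 1) * 3 :=
      mul_le_mul_of_nonneg_left (by linarith) (by linarith)
    have h6 : v * 1 ≤ v * w := mul_le_mul_of_nonneg_left (by linarith) (by linarith)
    nlinarith

/-! ### Asymptotics and inversion -/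

/-- De Bruijn's estimate `-log ρ(v) = v (log v + log log v - 1) + O(v log log v / log v)`. -/
lemma rho_asymptotic {ρ : ℝ → ℝ} (hcont : ContinuousOn ρ (Set.Ici 0))
    (hρ1 : ∀ u : ℝ, 0 ≤ u → u ≤ 1 → ρ u = 1)
    (hρ' : ∀ u : ℝ, 1 < u → HasDerivAt ρ (-(ρ (u - 1)) / u) u) :
    ∀ᶠ v in atTop, |-Real.log (ρ v) - v * (Real.log v + Real.log (Real.log v) - 1)| ≤
      5 * (v * (Real.log (Real.log v) / Real.log v)) := by
  have hlin : ∀ c : ℝ, 0 < c → ∀ᶠ v : ℝ in atTop, Real.log v ≤ c * v := by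
    intro c hc
    filter_upwards [Real.isLittleO_log_id_atTop.bound hc, eventually_ge_atTop 0] with v hv h0
    have := (le_abs_self _).trans hv
    simpa [abs_of_nonneg h0] using this
  have hsub : Tendsto (fun v : ℝ => v - 1) atTop atTop :=
    tendsto_atTop_add_const_right _ (-1) tendsto_id
  have hev : ∀ᶠ v : ℝ in atTop, Real.exp 1 + 4 ≤ Real.log (v - 1) ∧ 2 < v ∧
      10 + 4 * Real.log v ≤ v := by
    filter_upwards [(Real.tendsto_log_atTop.comp hsub).eventually_ge_atTop (Real.exp 1 + 4),
      eventually_gt_atTop 20, hlin (1 / 8) (by norm_num)] with v h1 h2 h3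
    exact ⟨h1, by linarith, by linarith⟩
  obtain ⟨A₀, hA₀⟩ := eventually_atTop.mp hev
  set A := max A₀ 3
  have hA3 : 3 ≤ A := le_max_right _ _
  have hA : ∀ v, A ≤ v → _ := fun v hv => hA₀ v ((le_max_left _ _).trans hv)
  have he := Real.exp_pos 1
  obtain ⟨K₁, hK₁⟩ := rho_upper hcont hρ1 hρ' (A := A) (by linarith)
    (fun t ht => hasDerivAt_upperTrial (t := t) (by linarith))
    (fun v hv => upperTrial_rate (by linarith [(hA v hv).1]) (hA v hv).2.1)
  obtain ⟨K₂, hK₂⟩ := rho_lower hcont hρ1 hρ' (A := A) (by linarith)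
    (fun t ht => hasDerivAt_lowerTrial (t := t) (by linarith))
    (fun v hv => lowerTrial_rate (hA v hv).1 (hA v hv).2.1 (hA v hv).2.2)
  set K := |K₁| + |K₂| + 1
  have hKpos : 0 < K := by positivity
  filter_upwards [eventually_ge_atTop A, hlin (1 / K) (by positivity)] with v hv hvK
  obtain ⟨a1, a2, -⟩ := hA v hv
  have hl : Real.exp 1 + 4 ≤ Real.log v := a1.trans (Real.log_le_log (by linarith) (by linarith))
  have hw : 1 ≤ Real.log (Real.log v) := by
    rw [Real.le_log_iff_exp_le (by linarith)]; linarith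
  have h1 := hK₁ v hv
  have h2 := hK₂ v hv
  rw [mul_div_assoc] at h2
  set l := Real.log v
  set w := Real.log l
  have hl0 : 0 < l := by linarith
  have hKv : K ≤ v / l := by
    rw [le_div_iff₀ hl0]
    calc K * l ≤ K * (1 / K * v) := by gcongr
      _ = v := by field_simp
  have hvl : v / l ≤ v * (w / l) := by
    rw [← mul_div_assoc]
    gcongr
    nlinarith
  have := le_abs_self K₁
  have := neg_abs_le K₂
  have := abs_nonneg K₁
  have := abs_nonneg K₂
  have hKdef : K = |K₁| + |K₂| + 1 := rfl
  rw [abs_le]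
  constructor <;> linarith

/-- Inversion of the relation `L = v (log v + log log v - 1) + O(v log log v / log v)`. -/
lemma invert {v L : ℝ} (hv : 0 < v) (hw : 1 ≤ Real.log (Real.log v))
    (hq : Real.log (Real.log v) / Real.log v ≤ 1 / 20) (hlv : 2 * Real.log v ≤ v)
    (hl : 1 < Real.log v)
    (hL : |L - v * (Real.log v + Real.log (Real.log v) - 1)| ≤
      5 * (v * (Real.log (Real.log v) / Real.log v))) :
    |1 / v - (Real.log L - 1) / L| ≤
      14 * Real.log (Real.log L) / (L * Real.log L) := by
  set l := Real.log v with hldef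
  set w := Real.log l with hwdef
  set q := w / l with hqdef
  have hl0 : 0 < l := by linarith
  have hq0 : 0 < q := div_pos (by linarith) hl0
  have hql : q * l = w := by rw [hqdef]; field_simp
  obtain ⟨m, hm⟩ : ∃ m, L = v * m := ⟨L / v, by field_simp⟩
  have hmq : |m - (l + w - 1)| ≤ 5 * q := by
    rw [hm, ← mul_sub, abs_mul, abs_of_pos hv] at hL
    have : v * |m - (l + w - 1)| ≤ v * (5 * q) := by linarith
    exact le_of_mul_le_mul_left this hv
  obtain ⟨hm1, hm2⟩ := abs_le.mp hmq
  have hm_one : 1 ≤ m := by nlinarith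
  have hL0 : 0 < L := by rw [hm]; positivity
  have hlogL : Real.log L = l + Real.log m := by
    rw [hm, Real.log_mul hv.ne' (by linarith)]
  have hmw : Real.log m = w + Real.log (m / l) := by
    rw [Real.log_div (by linarith) hl0.ne']; ring
  -- `m / l = 1 + O(q)`, so its logarithm is `O(q)`.
  have hml1 : m / l ≤ 1 + q := by
    rw [div_le_iff₀ hl0]; linarith
  have hml2 : 1 - q ≤ m / l := by
    rw [le_div_iff₀ hl0]; linarith
  have hml0 : 0 < m / l := by linarith
  have hlog1 : Real.log (m / l) ≤ 2 * q := by
    linarith [Real.log_le_sub_one_of_pos hml0]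
  have hlog2 : -(2 * q) ≤ Real.log (m / l) := by
    have h1 := Real.one_sub_inv_le_log_of_pos hml0
    have h2 : (m / l)⁻¹ ≤ 1 + 2 * q := by
      rw [inv_le_iff_one_le_mul₀ hml0]
      nlinarith
    linarith
  have hdiff : |m - (Real.log L - 1)| ≤ 7 * q := by
    rw [abs_le, hlogL, hmw]
    constructor <;> linarith
  have hlL : l ≤ Real.log L := by
    rw [hlogL]; linarith [Real.log_nonneg hm_one]
  have hLl : Real.log L ≤ 2 * l := by
    have : Real.log m ≤ l := Real.log_le_log (by linarith) (by nlinarith)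
    linarith
  have hwL : w ≤ Real.log (Real.log L) := Real.log_le_log hl0 hlL
  have hqL : q ≤ 2 * (Real.log (Real.log L) / Real.log L) := by
    rw [hqdef, ← mul_div_assoc, div_le_div_iff₀ hl0 (by linarith)]
    nlinarith
  have e : 1 / v - (Real.log L - 1) / L = (m - (Real.log L - 1)) / L := by
    have : m ≠ 0 := by linarith
    rw [sub_div]
    rw [hm]
    field_simp
  rw [e, abs_div, abs_of_pos hL0]
  calc |m - (Real.log L - 1)| / L ≤ 7 * (2 * (Real.log (Real.log L) / Real.log L)) / L := by
        gcongr
        linarith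
    _ = 14 * Real.log (Real.log L) / (L * Real.log L) := by
        have : Real.log L ≠ 0 := by linarith
        field_simp
        ring

theorem stmt6 (ρ : ℝ → ℝ)
    (hcont : ContinuousOn ρ (Set.Ici 0))
    (hρ1 : ∀ u : ℝ, 0 ≤ u → u ≤ 1 → ρ u = 1)
    (hρ' : ∀ u : ℝ, 1 < u → HasDerivAt ρ (-(ρ (u - 1)) / u) u)
    (u : ℕ → ℝ)
    (hu : ∀ n : ℕ, 2 ≤ n → 0 < u n ∧ ρ (u n) = 1 / (n : ℝ)) :
    (∀ m n : ℕ, 2 ≤ m → m < n → u m < u n) ∧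
    ∃ C : ℝ, 0 < C ∧ ∃ n₀ : ℕ, ∀ n : ℕ, n₀ ≤ n →
      |1 / u n - (Real.log (Real.log n) - 1) / Real.log n| ≤
        C * Real.log (Real.log (Real.log n)) /
          (Real.log n * Real.log (Real.log n)) := by
  have hanti := rho_strictAnti hcont hρ1 hρ'
  have hu1 : ∀ n : ℕ, 2 ≤ n → 1 < u n := by
    intro n hn
    by_contra hcon
    obtain ⟨h0, h1⟩ := hu n hn
    rw [hρ1 _ h0.le (not_lt.mp hcon)] at h1
    have hn' : (2 : ℝ) ≤ n := by exact_mod_cast hn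
    rw [eq_div_iff (by linarith)] at h1
    linarith
  refine ⟨fun m n hm hmn => ?_, 14, by norm_num, ?_⟩
  · rw [← hanti.lt_iff_gt (hu1 n (by omega)).le (hu1 m hm).le, (hu m hm).2,
      (hu n (by omega)).2]
    have : (0 : ℝ) < m := by exact_mod_cast (by omega : 0 < m)
    exact one_div_lt_one_div_of_lt this (by exact_mod_cast hmn)
  · have htend : Tendsto u atTop atTop := by
      rw [tendsto_atTop]
      intro b
      set B := max b 1
      have hB : 0 < ρ B := rho_pos hcont hρ1 hρ' B (zero_le_one.trans (le_max_right _ _))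
      filter_upwards [tendsto_one_div_atTop_nhds_zero_nat.eventually_lt_const hB,
        eventually_ge_atTop 2] with n hn hn2
      rw [← (hu n hn2).2] at hn
      exact (le_max_left b 1).trans
        ((hanti.lt_iff_gt (hu1 n hn2).le (le_max_right b 1)).mp hn).le
    have hll : Tendsto (fun v : ℝ => Real.log (Real.log v)) atTop atTop :=
      Real.tendsto_log_atTop.comp Real.tendsto_log_atTop
    have hev : ∀ᶠ v : ℝ in atTop, ∀ L, ρ v = Real.exp (-L) →
        |1 / v - (Real.log L - 1) / L| ≤ 14 * Real.log (Real.log L) / (L * Real.log L) := by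
      have hlo := Real.isLittleO_log_id_atTop
      filter_upwards [rho_asymptotic hcont hρ1 hρ', eventually_gt_atTop 0,
        hll.eventually_ge_atTop 1, Real.tendsto_log_atTop.eventually_gt_atTop 1,
        hlo.bound (show (0 : ℝ) < 1 / 2 by norm_num),
        Real.tendsto_log_atTop.eventually (hlo.bound (show (0 : ℝ) < 1 / 20 by norm_num))]
        with v h1 h2 h3 h4 h5 h6 L hL
      have h5' := (le_abs_self _).trans h5
      have h6' := (le_abs_self _).trans h6
      simp only [id, Real.norm_eq_abs] at h5' h6'
      rw [abs_of_pos h2] at h5'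
      rw [abs_of_pos (by linarith : 0 < Real.log v)] at h6'
      refine invert h2 h3 ?_ (by linarith) h4 ?_
      · rwa [div_le_iff₀ (by linarith)]
      · rwa [hL, Real.log_exp, neg_neg] at h1
    obtain ⟨n₀, hn₀⟩ := eventually_atTop.mp
      ((htend.eventually hev).and (eventually_ge_atTop 2))
    refine ⟨n₀, fun n hn => (hn₀ n hn).1 _ ?_⟩
    have h2 := (hn₀ n hn).2
    have : (0 : ℝ) < n := by exact_mod_cast (by omega : 0 < n)
    rw [(hu n h2).2, Real.exp_neg, Real.exp_log this, one_div]
end
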